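/- arXiv:1902.04459 — 7 statements merged into one kernel-verified Lean document; each statement's English description precedes it below -/
import Mathlib

section
/- Let T>0, N≥1, and let Q : [0,T] → M_N(ℂ) be a continuous family of symmetric complex N×N matrices, defining the time-dependent quadratic form q_t(X) = ⟨X, Q(t)X⟩ for X ∈ ℝ^N. Assume there exist constants 0<T*<T, c>0 and a positive integer k≥1 such that Re q_t(X) ≥ c t^k |X|² for all t ∈ [0,T*] and all X ∈ ℝ^N. Then there exist t₀ ∈ (0, min(1,T*)) and positive constants c₁, c₂ > 0 such that for all t ∈ (0,t₀) and all Ξ ∈ ℝ^N, |∫_{ℝ^N} e^{−i⟨X,Ξ⟩} e^{−q_t(X)} dX| ≤ c₁ t^{−kN/2} e^{−c₂ t^{2k} |Ξ|²}. -/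
open MeasureTheory

lemma aux_int {N : ℕ} {b : ℝ} (hb : 0 < b) :
    Integrable (fun X : EuclideanSpace ℝ (Fin N) => Real.exp (-b * ‖X‖ ^ 2)) := by
  have h := (GaussianFourier.integrable_cexp_neg_mul_sq_norm_add (V := EuclideanSpace ℝ (Fin N))
    (b := (b : ℂ)) (by simpa using hb) 0 0).norm
  refine h.congr (Filter.Eventually.of_forall fun X => ?_)
  simp only [Complex.norm_exp]
  congr 1
  have : (-(b : ℂ) * (‖X‖ : ℂ) ^ 2 + 0 * ((inner ℝ (0 : EuclideanSpace ℝ (Fin N)) X : ℝ) : ℂ))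
      = ((-b * ‖X‖ ^ 2 : ℝ) : ℂ) := by push_cast; ring
  rw [this, Complex.ofReal_re]

lemma aux_young {a B x : ℝ} (ha : 0 < a) :
    -a * x ^ 2 + B * x ≤ B ^ 2 / (2 * a) + -(a / 2) * x ^ 2 := by
  have : B ^ 2 / (2 * a) + -(a / 2) * x ^ 2 - (-a * x ^ 2 + B * x) = (a * x - B) ^ 2 / (2 * a) := by
    field_simp; ring
  have h2 : 0 ≤ (a * x - B) ^ 2 / (2 * a) := by positivity
  linarith

lemma aux_bound {a C R x : ℝ} (g l z : ℂ) (ha : 0 < a) (hg : g.re ≤ -a * x ^ 2)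
    (hC : 0 ≤ C) (hx : 0 ≤ x)
    (hl : ‖l‖ ≤ C * x) (hz : ‖z‖ ≤ R) :
    ‖Complex.exp (g + z * l)‖ ≤ Real.exp ((R * C) ^ 2 / (2 * a)) * Real.exp (-(a / 2) * x ^ 2) := by
  rw [Complex.norm_exp, ← Real.exp_add]
  apply Real.exp_le_exp.2
  have h1 : (z * l).re ≤ R * C * x := by
    calc (z * l).re ≤ ‖z * l‖ := Complex.re_le_norm _
      _ = ‖z‖ * ‖l‖ := norm_mul _ _
      _ ≤ R * (C * x) := mul_le_mul hz hl (norm_nonneg _) ((norm_nonneg _).trans hz)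
      _ = _ := by ring
  have := aux_young (B := R * C) (x := x) ha
  rw [Complex.add_re]
  linarith

lemma aux_diff {N : ℕ} (g L : EuclideanSpace ℝ (Fin N) → ℂ) (hgc : Continuous g)
    (hLc : Continuous L) {a C : ℝ} (ha : 0 < a) (hC : 0 ≤ C)
    (hg : ∀ X, (g X).re ≤ -a * ‖X‖ ^ 2) (hL : ∀ X, ‖L X‖ ≤ C * ‖X‖) :
    Differentiable ℂ (fun z : ℂ => ∫ X, Complex.exp (g X + z * L X)) := by
  intro z₀
  have hI : ∀ K : ℝ, Integrable (fun X : EuclideanSpace ℝ (Fin N) =>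
      Real.exp K * Real.exp (-(a / 2) * ‖X‖ ^ 2)) := fun K => (aux_int (half_pos ha)).const_mul _
  have key := hasDerivAt_integral_of_dominated_loc_of_deriv_le
    (μ := (volume : Measure (EuclideanSpace ℝ (Fin N))))
    (F := fun (z : ℂ) X => Complex.exp (g X + z * L X))
    (F' := fun (z : ℂ) X => Complex.exp (g X + z * L X) * L X)
    (x₀ := z₀) (s := Metric.ball z₀ 1)
    (bound := fun X => Real.exp (((‖z₀‖ + 2) * C) ^ 2 / (2 * a)) * Real.exp (-(a / 2) * ‖X‖ ^ 2))
    (Metric.ball_mem_nhds _ one_pos)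
    (Filter.Eventually.of_forall fun z =>
      (by fun_prop : Continuous fun X => Complex.exp (g X + z * L X)).aestronglyMeasurable)
    ?_
    (by fun_prop : Continuous fun X => Complex.exp (g X + z₀ * L X) * L X).aestronglyMeasurable
    ?_ (hI _) ?_
  · exact key.2.differentiableAt
  · refine (hI _).mono' (by fun_prop :
      Continuous fun X => Complex.exp (g X + z₀ * L X)).aestronglyMeasurable
      (Filter.Eventually.of_forall fun X =>
        aux_bound (g X) (L X) z₀ ha (hg X) hC (norm_nonneg X) (hL X) le_rfl)
  · refine Filter.Eventually.of_forall fun X z hz => ?_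
    have hz' : ‖z‖ ≤ ‖z₀‖ + 1 := by
      have : ‖z - z₀‖ < 1 := by simpa [dist_eq_norm] using hz
      have := norm_le_norm_add_norm_sub' z z₀
      linarith
    rw [norm_mul, Complex.norm_exp, ← Real.exp_add]
    have h1 : ‖L X‖ ≤ Real.exp (C * ‖X‖) := by
      have := Real.add_one_le_exp (C * ‖X‖)
      have := hL X
      linarith
    have h2 : (z * L X).re ≤ (‖z₀‖ + 1) * (C * ‖X‖) := by
      calc (z * L X).re ≤ ‖z * L X‖ := Complex.re_le_norm _
        _ = ‖z‖ * ‖L X‖ := norm_mul _ _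
        _ ≤ _ := mul_le_mul hz' (hL X) (norm_nonneg _) (by positivity)
    calc _ ≤ Real.exp ((g X + z * L X).re) * Real.exp (C * ‖X‖) := by gcongr
      _ = Real.exp ((g X + z * L X).re + C * ‖X‖) := (Real.exp_add _ _).symm
      _ ≤ _ := by
        apply Real.exp_le_exp.2
        have := aux_young (B := (‖z₀‖ + 2) * C) (x := ‖X‖) ha
        have := hg X
        rw [Complex.add_re]
        linarith
  · refine Filter.Eventually.of_forall fun X z _ => ?_
    have : HasDerivAt (fun z : ℂ => g X + z * L X) (L X) z := by
      simpa using ((hasDerivAt_id z).mul_const (L X)).const_add (g X)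
    exact this.cexp

lemma aux_shift {N : ℕ} (g L : EuclideanSpace ℝ (Fin N) → ℂ) (hgc : Continuous g)
    (hLc : Continuous L) {a C : ℝ} (ha : 0 < a) (hC : 0 ≤ C)
    (hg : ∀ X, (g X).re ≤ -a * ‖X‖ ^ 2) (hL : ∀ X, ‖L X‖ ≤ C * ‖X‖)
    (V : EuclideanSpace ℝ (Fin N)) (p m : ℂ)
    (hs : ∀ (s : ℝ) X, g (X + s • V) = g X + s * L X + (s ^ 2 * p + s * m)) (z : ℂ) :
    ∫ X, Complex.exp (g X) =
      Complex.exp (z ^ 2 * p + z * m) * ∫ X, Complex.exp (g X + z * L X) := by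
  have hd := aux_diff g L hgc hLc ha hC hg hL
  have hΦ : Differentiable ℂ (fun z : ℂ =>
      Complex.exp (z ^ 2 * p + z * m) * ∫ X, Complex.exp (g X + z * L X)) := by
    apply Differentiable.mul _ hd
    fun_prop
  have hreal : ∀ s : ℝ, Complex.exp ((s : ℂ) ^ 2 * p + s * m) *
      ∫ X, Complex.exp (g X + s * L X) = ∫ X, Complex.exp (g X) := by
    intro s
    rw [← integral_const_mul, ← integral_add_right_eq_self (fun X => Complex.exp (g X)) (s • V)]
    congr 1
    ext X
    rw [hs, ← Complex.exp_add]
    congr 1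
    ring
  have hA := (hΦ.differentiableOn (s := Set.univ)).analyticOnNhd isOpen_univ
  have hB : AnalyticOnNhd ℂ (fun _ : ℂ => ∫ X, Complex.exp (g X)) Set.univ :=
    analyticOnNhd_const
  have hfreq : ∃ᶠ w in nhdsWithin (0 : ℂ) {0}ᶜ,
      (fun z : ℂ => Complex.exp (z ^ 2 * p + z * m) * ∫ X, Complex.exp (g X + z * L X)) w
        = (fun _ : ℂ => ∫ X, Complex.exp (g X)) w := by
    have ht : Filter.Tendsto (fun s : ℝ => (s : ℂ)) (nhdsWithin 0 {0}ᶜ)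
        (nhdsWithin (0 : ℂ) {0}ᶜ) := by
      apply tendsto_nhdsWithin_iff.2 ⟨?_, ?_⟩
      · exact (Complex.continuous_ofReal.tendsto' 0 0 (by simp)).mono_left nhdsWithin_le_nhds
      · filter_upwards [self_mem_nhdsWithin] with s hs'
        simpa using hs'
    exact ht.frequently (Filter.Eventually.of_forall fun s => hreal s).frequently
  have := AnalyticOnNhd.eq_of_frequently_eq hA hB hfreq
  exact (congrFun this z).symm

lemma aux_bilin {N : ℕ} (A : Matrix (Fin N) (Fin N) ℂ) {C : ℝ} (hC : ∀ i j, ‖A i j‖ ≤ C)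
    (X Y : EuclideanSpace ℝ (Fin N)) :
    ‖∑ i, (X i : ℂ) * A.mulVec (fun j => (Y j : ℂ)) i‖ ≤ (N * N * C) * (‖X‖ * ‖Y‖) := by
  have h1 : ∀ (Z : EuclideanSpace ℝ (Fin N)) i, ‖(Z i : ℂ)‖ ≤ ‖Z‖ := fun Z i => by
    rw [Complex.norm_real]; exact PiLp.norm_apply_le Z i
  simp only [Matrix.mulVec, dotProduct, Finset.mul_sum]
  calc _ ≤ ∑ i : Fin N, ∑ j : Fin N, ‖(X i : ℂ) * (A i j * (Y j : ℂ))‖ :=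
        (norm_sum_le _ _).trans (Finset.sum_le_sum fun i _ => norm_sum_le _ _)
    _ ≤ ∑ i : Fin N, ∑ j : Fin N, ‖X‖ * (C * ‖Y‖) := by
        refine Finset.sum_le_sum fun i _ => Finset.sum_le_sum fun j _ => ?_
        rw [norm_mul, norm_mul]
        exact mul_le_mul (h1 X i) (mul_le_mul (hC i j) (h1 Y j) (norm_nonneg _)
          ((norm_nonneg _).trans (hC i j))) (by positivity) (norm_nonneg _)
    _ = _ := by simp; ring

lemma aux_main {N : ℕ} (A : Matrix (Fin N) (Fin N) ℂ) {M a : ℝ} (ha : 0 < a) (hM : 0 ≤ M)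
    (hA : ∀ X Y : EuclideanSpace ℝ (Fin N),
      ‖∑ i, (X i : ℂ) * A.mulVec (fun j => (Y j : ℂ)) i‖ ≤ M * (‖X‖ * ‖Y‖))
    (hco : ∀ X : EuclideanSpace ℝ (Fin N),
      a * ‖X‖ ^ 2 ≤ (∑ i, (X i : ℂ) * A.mulVec (fun j => (X j : ℂ)) i).re)
    (Ξ : EuclideanSpace ℝ (Fin N)) (s : ℝ) (hs : 0 ≤ s) :
    ‖∫ X : EuclideanSpace ℝ (Fin N),
        Complex.exp (-(Complex.I * ∑ i, (X i : ℂ) * (Ξ i : ℂ)) -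
          ∑ i, (X i : ℂ) * A.mulVec (fun j => (X j : ℂ)) i)‖
      ≤ Real.exp ((-s + s ^ 2 * M + 2 * s ^ 2 * M ^ 2 / a) * ‖Ξ‖ ^ 2) *
        (Real.pi / (a / 2)) ^ ((N : ℝ) / 2) := by
  set b : EuclideanSpace ℝ (Fin N) → EuclideanSpace ℝ (Fin N) → ℂ :=
    fun X Y => ∑ i, (X i : ℂ) * A.mulVec (fun j => (Y j : ℂ)) i with hb
  set e : EuclideanSpace ℝ (Fin N) → ℂ := fun X => ∑ i, (X i : ℂ) * (Ξ i : ℂ) with he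
  have he_re : ∀ X, (Complex.I * e X).re = 0 := by
    intro X
    have : e X = ((∑ i, X i * Ξ i : ℝ) : ℂ) := by simp [he]
    rw [this]; simp
  have heΞ : e Ξ = ((‖Ξ‖ ^ 2 : ℝ) : ℂ) := by
    rw [EuclideanSpace.norm_sq_eq]
    simp [he, pow_two]
  have hbc1 : Continuous fun X => b X X := by
    simp only [hb, Matrix.mulVec, dotProduct]; fun_prop
  have hbc2 : Continuous fun X => b X Ξ := by
    simp only [hb, Matrix.mulVec, dotProduct]; fun_prop
  have hbc3 : Continuous fun X => b Ξ X := by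
    simp only [hb, Matrix.mulVec, dotProduct]; fun_prop
  have hec : Continuous e := by
    simp only [he]; fun_prop
  have hshift := aux_shift (fun X => -(Complex.I * e X) - b X X) (fun X => -(b X Ξ + b Ξ X))
    (by fun_prop) (by fun_prop) (a := a) (C := 2 * M * ‖Ξ‖) ha (by positivity)
    (fun X => by
      have := hco X
      rw [Complex.sub_re, Complex.neg_re, he_re]
      simp only [hb]
      linarith)
    (fun X => by
      rw [norm_neg]
      have h1 := hA X Ξ
      have h2 := hA Ξ X
      have h3 := norm_add_le (b X Ξ) (b Ξ X)
      simp only [hb] at h3 ⊢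
      linarith) Ξ (-(b Ξ Ξ)) (-(Complex.I * e Ξ))
    (fun s X => by
      simp only [hb, he, Matrix.mulVec, dotProduct, PiLp.add_apply, PiLp.smul_apply, smul_eq_mul,
        Complex.ofReal_add, Complex.ofReal_mul, Finset.mul_sum, mul_add, add_mul,
        Finset.sum_add_distrib, neg_add, mul_neg]
      have h1 : ∀ u v : Fin N → ℂ, ∑ x, ∑ i, (s : ℂ) * u x * (A x i * (v i))
          = s * ∑ x, ∑ i, u x * (A x i * v i) := fun u v => by
        simp only [Finset.mul_sum, mul_assoc]
      have h2 : ∀ u v : Fin N → ℂ, ∑ x, ∑ i, u x * (A x i * (s * v i))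
          = s * ∑ x, ∑ i, u x * (A x i * v i) := fun u v => by
        simp only [Finset.mul_sum]
        exact Finset.sum_congr rfl fun _ _ => Finset.sum_congr rfl fun _ _ => by ring
      have h3 : ∑ x, Complex.I * ((s : ℂ) * (Ξ x : ℂ) * (Ξ x : ℂ))
          = s * ∑ x, Complex.I * ((Ξ x : ℂ) * (Ξ x : ℂ)) := by
        simp only [Finset.mul_sum]
        exact Finset.sum_congr rfl fun _ _ => by ring
      have h4 : ∑ x, ∑ i, (s : ℂ) * (Ξ x : ℂ) * (A x i * (s * (Ξ i : ℂ)))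
          = s ^ 2 * ∑ x, ∑ i, (Ξ x : ℂ) * (A x i * (Ξ i : ℂ)) := by
        simp only [Finset.mul_sum]
        exact Finset.sum_congr rfl fun _ _ => Finset.sum_congr rfl fun _ _ => by ring
      rw [h4, h3, h1 (fun x => (Ξ x : ℂ)) (fun x => (X x : ℂ)),
        h2 (fun x => (X x : ℂ)) (fun x => (Ξ x : ℂ))]
      simp only [← Finset.mul_sum]
      ring) (-(Complex.I * s))
  change ‖∫ X, Complex.exp (-(Complex.I * e X) - b X X)‖ ≤ _
  rw [hshift, norm_mul, Complex.norm_exp]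
  have hp : ((-(Complex.I * s)) ^ 2 * (-(b Ξ Ξ)) + -(Complex.I * s) * -(Complex.I * e Ξ)).re
      ≤ (-s + s ^ 2 * M) * ‖Ξ‖ ^ 2 := by
    have h1 : (-(Complex.I * s)) ^ 2 * (-(b Ξ Ξ)) + -(Complex.I * s) * -(Complex.I * e Ξ)
        = ((s ^ 2 : ℝ) : ℂ) * b Ξ Ξ - ((s * ‖Ξ‖ ^ 2 : ℝ) : ℂ) := by
      rw [heΞ]
      push_cast
      linear_combination (-(s : ℂ) ^ 2 * b Ξ Ξ + s * (‖Ξ‖ : ℂ) ^ 2) * Complex.I_sq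
    rw [h1, Complex.sub_re, Complex.re_ofReal_mul, Complex.ofReal_re]
    have h2 : (b Ξ Ξ).re ≤ M * (‖Ξ‖ * ‖Ξ‖) := (Complex.re_le_norm _).trans (hA Ξ Ξ)
    nlinarith [sq_nonneg s]
  have hint : ‖∫ X, Complex.exp (-(Complex.I * e X) - b X X +
      -(Complex.I * s) * -(b X Ξ + b Ξ X))‖ ≤
      ∫ X : EuclideanSpace ℝ (Fin N), Real.exp ((s * (2 * M * ‖Ξ‖)) ^ 2 / (2 * a)) *
        Real.exp (-(a / 2) * ‖X‖ ^ 2) := by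
    refine norm_integral_le_of_norm_le ((aux_int (half_pos ha)).const_mul _)
      (Filter.Eventually.of_forall fun X => ?_)
    refine aux_bound _ _ _ ha ?_ (by positivity) (norm_nonneg X) ?_ ?_
    · have := hco X
      rw [Complex.sub_re, Complex.neg_re, he_re]
      simp only [hb]
      linarith
    · rw [norm_neg]
      have h1 := hA X Ξ
      have h2 := hA Ξ X
      have h3 := norm_add_le (b X Ξ) (b Ξ X)
      simp only [hb] at h3 ⊢
      linarith
    · simp [abs_of_nonneg hs]
  rw [integral_const_mul, GaussianFourier.integral_rexp_neg_mul_sq_norm (half_pos ha),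
    finrank_euclideanSpace_fin] at hint
  calc _ ≤ Real.exp ((-s + s ^ 2 * M) * ‖Ξ‖ ^ 2) *
      (Real.exp ((s * (2 * M * ‖Ξ‖)) ^ 2 / (2 * a)) * (Real.pi / (a / 2)) ^ ((N : ℝ) / 2)) := by
        gcongr
    _ = _ := by
        rw [← mul_assoc, ← Real.exp_add]
        congr 2
        field_simp

/-- Gaussian-type decay of the Fourier transform of `e^{-q_t}` for a
time-dependent complex-valued quadratic form `q_t(X) = ⟨X, Q(t)X⟩` on `ℝ^N` whose real part
satisfies the coercivity estimate `Re q_t(X) ≥ c t^k |X|²` on `[0, T*]`. -/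
theorem statement_0 (N : ℕ) (hN : 1 ≤ N) (T Tstar c : ℝ) (k : ℕ)
    (hT : 0 < T) (hTstar : 0 < Tstar) (hTstarT : Tstar < T) (hc : 0 < c) (hk : 1 ≤ k)
    (Q : ℝ → Matrix (Fin N) (Fin N) ℂ)
    (hQcont : ContinuousOn Q (Set.Icc 0 T))
    (hQsymm : ∀ t ∈ Set.Icc (0 : ℝ) T, (Q t).IsSymm)
    (q : ℝ → EuclideanSpace ℝ (Fin N) → ℂ)
    (hq : ∀ t X, q t X = ∑ i, (X i : ℂ) * (Q t).mulVec (fun j => (X j : ℂ)) i)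
    (hcoer : ∀ t ∈ Set.Icc (0 : ℝ) Tstar, ∀ X : EuclideanSpace ℝ (Fin N),
      c * t ^ k * ‖X‖ ^ 2 ≤ (q t X).re) :
    ∃ t₀ ∈ Set.Ioo (0 : ℝ) (min 1 Tstar), ∃ c₁ > (0 : ℝ), ∃ c₂ > (0 : ℝ),
      ∀ t ∈ Set.Ioo (0 : ℝ) t₀, ∀ Ξ : EuclideanSpace ℝ (Fin N),
        ‖∫ X : EuclideanSpace ℝ (Fin N),
            Complex.exp (-(Complex.I * ∑ i, (X i : ℂ) * (Ξ i : ℂ))) * Complex.exp (-(q t X))‖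
          ≤ c₁ / t ^ ((k * N : ℝ) / 2) * Real.exp (-c₂ * t ^ (2 * k) * ‖Ξ‖ ^ 2) := by
  have hC : ∃ C : ℝ, 0 < C ∧ ∀ t ∈ Set.Icc (0 : ℝ) T, ∀ i j, ‖Q t i j‖ ≤ C := by
    have h : ∀ i j, ∃ C, ∀ t ∈ Set.Icc (0 : ℝ) T, ‖Q t i j‖ ≤ C := fun i j =>
      isCompact_Icc.exists_bound_of_continuousOn
        ((by fun_prop : Continuous fun A : Matrix (Fin N) (Fin N) ℂ => A i j).comp_continuousOn
          hQcont)
    choose C hC using h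
    refine ⟨∑ i, ∑ j, |C i j| + 1, by positivity, fun t ht i j => ?_⟩
    have h1 := hC i j t ht
    have h2 : |C i j| ≤ ∑ j, |C i j| :=
      Finset.single_le_sum (f := fun j => |C i j|) (fun _ _ => abs_nonneg _) (Finset.mem_univ j)
    have h3 : ∑ j, |C i j| ≤ ∑ i, ∑ j, |C i j| :=
      Finset.single_le_sum (f := fun i => ∑ j, |C i j|)
        (fun _ _ => Finset.sum_nonneg fun _ _ => abs_nonneg _) (Finset.mem_univ i)
    have h4 := le_abs_self (C i j)
    linarith
  obtain ⟨C, hC0, hC⟩ := hC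
  have hN' : (0 : ℝ) < N := by exact_mod_cast hN
  set M : ℝ := N * N * C with hMdef
  have hM : 0 < M := by positivity
  have hmin : 0 < min 1 Tstar := lt_min one_pos hTstar
  set D : ℝ := M + 2 * M ^ 2 / c with hD
  have hD0 : 0 < D := by positivity
  set ε : ℝ := 1 / (2 * D) with hε
  have hε0 : 0 < ε := by positivity
  refine ⟨min 1 Tstar / 2, ⟨by positivity, by linarith⟩, (Real.pi / (c / 2)) ^ ((N : ℝ) / 2),
    by positivity, ε / 2, by positivity, fun t ht Ξ => ?_⟩
  obtain ⟨ht0, ht1⟩ := ht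
  have ht1' : t ≤ 1 := by have := min_le_left 1 Tstar; linarith
  have htT : t ≤ Tstar := by have := min_le_right 1 Tstar; linarith
  have htk : 0 < t ^ k := pow_pos ht0 k
  have htk1 : t ^ k ≤ 1 := pow_le_one₀ ht0.le ht1'
  have key := aux_main (Q t) (M := M) (a := c * t ^ k) (by positivity) hM.le
    (fun X Y => aux_bilin (Q t) (hC t ⟨ht0.le, by linarith⟩) X Y)
    (fun X => by rw [← hq]; exact hcoer t ⟨ht0.le, htT⟩ X) Ξ (ε * t ^ k) (by positivity)
  have hE : ∀ X : EuclideanSpace ℝ (Fin N),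
      Complex.exp (-(Complex.I * ∑ i, (X i : ℂ) * (Ξ i : ℂ))) * Complex.exp (-(q t X)) =
      Complex.exp (-(Complex.I * ∑ i, (X i : ℂ) * (Ξ i : ℂ)) -
          ∑ i, (X i : ℂ) * (Q t).mulVec (fun j => (X j : ℂ)) i) := fun X => by
    rw [← Complex.exp_add, hq, sub_eq_add_neg]
  simp only [hE]
  refine key.trans ?_
  rw [mul_comm]
  have hpow : (Real.pi / (c * t ^ k / 2)) ^ ((N : ℝ) / 2) =
      (Real.pi / (c / 2)) ^ ((N : ℝ) / 2) / t ^ ((k * N : ℝ) / 2) := by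
    have h1 : t ^ ((k * N : ℝ) / 2) = (t ^ k) ^ ((N : ℝ) / 2) := by
      rw [← Real.rpow_natCast t k, ← Real.rpow_mul ht0.le]
      congr 1; ring
    rw [h1, ← Real.div_rpow (by positivity) htk.le]
    congr 1
    field_simp
  rw [hpow]
  gcongr
  have hεD : ε * D = 1 / 2 := by rw [hε]; field_simp
  have h1 : 2 * (ε * t ^ k) ^ 2 * M ^ 2 / (c * t ^ k) = ε ^ 2 * t ^ k * (2 * M ^ 2 / c) := by
    field_simp
  have h2 : (ε * t ^ k) ^ 2 * M ≤ ε ^ 2 * t ^ k * M := by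
    have : t ^ k * t ^ k ≤ t ^ k * 1 := by gcongr
    have h3 : (ε * t ^ k) ^ 2 * M = ε ^ 2 * M * (t ^ k * t ^ k) := by ring
    rw [h3]
    calc _ ≤ ε ^ 2 * M * (t ^ k * 1) := by gcongr
      _ = _ := by ring
  have h3 : ε ^ 2 * t ^ k * M + ε ^ 2 * t ^ k * (2 * M ^ 2 / c) = ε * t ^ k / 2 := by
    have : ε ^ 2 * t ^ k * M + ε ^ 2 * t ^ k * (2 * M ^ 2 / c) = ε * t ^ k * (ε * D) := by
      rw [hD]; ring
    rw [this, hεD]; ring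
  have h4 : ε / 2 * t ^ (2 * k) ≤ ε / 2 * t ^ k := by
    have : t ^ (2 * k) ≤ t ^ k := pow_le_pow_of_le_one ht0.le ht1' (by omega)
    gcongr
  rw [h1]
  linarith
end

section
/- Let T>0, N≥1, and let Q : [0,T] → M_N(ℂ) be a continuous family of symmetric complex N×N matrices, defining the time-dependent quadratic form q_t(X) = ⟨X, Q(t)X⟩ for X ∈ ℝ^N. Assume there exist constants 0<T*<T, c>0 and a positive integer k≥1 such that Re q_t(X) ≥ c t^k |X|² for all t ∈ [0,T*] and all X ∈ ℝ^N. Then there exist t₀ ∈ (0, min(1,T*)) and a constant C>1 such that for all multi-indices α, β ∈ ℕ^N and all t ∈ (0,t₀), sup_{X ∈ ℝ^N} |X^α ∂_X^β (e^{−q_t(X)})| ≤ C^{1+|α|+|β|} · t^{−(k/2)(|α|+2|β|+s)} · (α!)^{1/2} (β!)^{1/2}, where s = 5N/4 + 2⌊N/2⌋ + 2. -/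
open MeasureTheory

/-- The partial derivative in the `i`-th coordinate direction of a function on `ℝ^N`. -/
noncomputable def pderivE {N : ℕ} (i : Fin N) (f : EuclideanSpace ℝ (Fin N) → ℂ) :
    EuclideanSpace ℝ (Fin N) → ℂ :=
  fun x => fderiv ℝ f x (EuclideanSpace.single i 1)

/-- The multi-index iterated partial derivative `∂_X^β`. -/
noncomputable def mderiv {N : ℕ} (β : Fin N → ℕ) (f : EuclideanSpace ℝ (Fin N) → ℂ) :
    EuclideanSpace ℝ (Fin N) → ℂ :=
  (List.ofFn fun i : Fin N => (pderivE i)^[β i]).foldr (· ∘ ·) id f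

/-- Complex partial derivative. -/
noncomputable def pderivC {N : ℕ} (i : Fin N) (G : (Fin N → ℂ) → ℂ) : (Fin N → ℂ) → ℂ :=
  fun z => fderiv ℂ G z (Pi.single i 1)

/-- Embedding of real vectors in complex ones, as a real continuous linear map. -/
noncomputable def embC (N : ℕ) : EuclideanSpace ℝ (Fin N) →L[ℝ] (Fin N → ℂ) :=
  ContinuousLinearMap.pi fun i => Complex.ofRealCLM.comp (EuclideanSpace.proj i)

lemma embC_apply {N : ℕ} (X : EuclideanSpace ℝ (Fin N)) (i : Fin N) :
    embC N X i = (X i : ℂ) := by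
  simp [embC]

lemma embC_single {N : ℕ} (i : Fin N) :
    embC N (EuclideanSpace.single i 1) = Pi.single i 1 := by
  ext j
  rw [embC_apply]
  by_cases h : j = i
  · subst h; simp
  · simp [h]

lemma pderivC_contDiff {N : ℕ} (i : Fin N) {G : (Fin N → ℂ) → ℂ}
    (hG : ContDiff ℂ (⊤ : ℕ∞) G) : ContDiff ℂ (⊤ : ℕ∞) (pderivC i G) := by
  unfold pderivC
  exact (hG.fderiv_right (m := (⊤ : ℕ∞)) (by simp)).clm_apply contDiff_const

lemma pderivC_iter_contDiff {N : ℕ} (i : Fin N) (n : ℕ) {G : (Fin N → ℂ) → ℂ}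
    (hG : ContDiff ℂ (⊤ : ℕ∞) G) : ContDiff ℂ (⊤ : ℕ∞) ((pderivC i)^[n] G) := by
  induction n generalizing G with
  | zero => simpa using hG
  | succ n ih => rw [Function.iterate_succ_apply]; exact ih (pderivC_contDiff i hG)

lemma pderivE_comp {N : ℕ} (i : Fin N) {G : (Fin N → ℂ) → ℂ}
    (hG : ContDiff ℂ (⊤ : ℕ∞) G) : pderivE i (G ∘ embC N) = pderivC i G ∘ embC N := by
  ext x
  have h1 : HasFDerivAt G (fderiv ℂ G (embC N x)) (embC N x) :=
    (hG.differentiable (by simp) _).hasFDerivAt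
  have h2 := (h1.restrictScalars ℝ).comp x (embC N).hasFDerivAt
  simp only [pderivE, pderivC, Function.comp_apply]
  rw [h2.fderiv]
  simp [embC_single]

lemma pderivE_iter_comp {N : ℕ} (i : Fin N) (n : ℕ) {G : (Fin N → ℂ) → ℂ}
    (hG : ContDiff ℂ (⊤ : ℕ∞) G) :
    (pderivE i)^[n] (G ∘ embC N) = (pderivC i)^[n] G ∘ embC N := by
  induction n generalizing G with
  | zero => rfl
  | succ n ih =>
    rw [Function.iterate_succ_apply, Function.iterate_succ_apply, pderivE_comp i hG,
      ih (pderivC_contDiff i hG)]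

/-- Complex iterated derivative along a list of indices. -/
noncomputable def lderivC {N : ℕ} (β : Fin N → ℕ) (F : (Fin N → ℂ) → ℂ) :
    List (Fin N) → (Fin N → ℂ) → ℂ
  | [] => F
  | i :: l => (pderivC i)^[β i] (lderivC β F l)

lemma lderivC_contDiff {N : ℕ} (β : Fin N → ℕ) {F : (Fin N → ℂ) → ℂ}
    (hF : ContDiff ℂ (⊤ : ℕ∞) F) (l : List (Fin N)) :
    ContDiff ℂ (⊤ : ℕ∞) (lderivC β F l) := by
  induction l with
  | nil => exact hF
  | cons i l ih => exact pderivC_iter_contDiff i _ ih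

lemma foldr_comp {N : ℕ} (β : Fin N → ℕ) {F : (Fin N → ℂ) → ℂ}
    (hF : ContDiff ℂ (⊤ : ℕ∞) F) (l : List (Fin N)) :
    (l.map fun i => (pderivE i)^[β i]).foldr (· ∘ ·) id (F ∘ embC N)
      = lderivC β F l ∘ embC N := by
  induction l with
  | nil => rfl
  | cons i l ih =>
    simp only [List.map_cons, List.foldr_cons, Function.comp_apply, lderivC]
    rw [ih, pderivE_iter_comp i _ (lderivC_contDiff β hF l)]

lemma mderiv_comp {N : ℕ} (β : Fin N → ℕ) {F : (Fin N → ℂ) → ℂ}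
    (hF : ContDiff ℂ (⊤ : ℕ∞) F) :
    mderiv β (F ∘ embC N) = lderivC β F (List.finRange N) ∘ embC N := by
  rw [← foldr_comp β hF, mderiv, List.ofFn_eq_map]

lemma line_deriv {N : ℕ} (i : Fin N) (n : ℕ) {G : (Fin N → ℂ) → ℂ}
    (hG : ContDiff ℂ (⊤ : ℕ∞) G) (z : Fin N → ℂ) :
    iteratedDeriv n (fun ζ : ℂ => G (z + ζ • Pi.single i 1))
      = fun ζ : ℂ => (pderivC i)^[n] G (z + ζ • Pi.single i 1) := by
  induction n generalizing G with
  | zero => simp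
  | succ n ih =>
    rw [iteratedDeriv_succ', Function.iterate_succ_apply, ← ih (pderivC_contDiff i hG)]
    congr 1
    ext ζ
    have h1 : HasFDerivAt G (fderiv ℂ G (z + ζ • Pi.single i 1)) (z + ζ • Pi.single i 1) :=
      (hG.differentiable (by simp) _).hasFDerivAt
    have h2 : HasDerivAt (fun ζ : ℂ => z + ζ • (Pi.single i 1 : Fin N → ℂ))
        (Pi.single i 1) ζ := by
      simpa using ((hasDerivAt_id ζ).smul_const (Pi.single i 1 : Fin N → ℂ)).const_add z
    exact (h1.comp_hasDerivAt ζ h2).deriv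

/-- Cauchy estimates in several variables. -/
lemma cauchy_list {N : ℕ} (β : Fin N → ℕ) {F : (Fin N → ℂ) → ℂ}
    (hF : ContDiff ℂ (⊤ : ℕ∞) F) (x : Fin N → ℂ) (r : Fin N → ℝ) (hr : ∀ i, 0 < r i) (K : ℝ)
    (hK : ∀ w : Fin N → ℂ, (∀ j, ‖w j‖ ≤ r j) → ‖F (x + w)‖ ≤ K) (l : List (Fin N))
    (hl : l.Nodup) (w : Fin N → ℂ) (hw : ∀ j, ‖w j‖ ≤ r j) (hw0 : ∀ j ∈ l, w j = 0) :
    ‖lderivC β F l (x + w)‖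
      ≤ K * (l.map fun i => ((β i).factorial : ℝ) / r i ^ β i).prod := by
  induction l generalizing w with
  | nil => simpa [lderivC] using hK w hw
  | cons i l ih =>
    rw [List.nodup_cons] at hl
    have hG := lderivC_contDiff β hF l
    set G := lderivC β F l with hGdef
    set K' := K * (l.map fun i => ((β i).factorial : ℝ) / r i ^ β i).prod with hK'
    have hd : Differentiable ℂ (fun ζ : ℂ => G ((x + w) + ζ • Pi.single i 1)) :=
      (hG.differentiable (by simp)).comp (by fun_prop)
    have key := Complex.norm_iteratedDeriv_le_of_forall_mem_sphere_norm_le (c := 0) (R := r i)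
      (C := K') (n := β i) (hr i) (f := fun ζ : ℂ => G ((x + w) + ζ • Pi.single i 1))
      hd.diffContOnCl (by
        intro ζ hζ
        have hζ' : ‖ζ‖ = r i := by simpa using hζ
        rw [add_assoc]
        apply ih hl.2
        · intro j
          by_cases h : j = i
          · subst h
            have : w j = 0 := hw0 j (by simp)
            simp [this, hζ']
          · simpa [h] using hw j
        · intro j hj
          have : j ≠ i := fun h => hl.1 (h ▸ hj)
          simp [this, hw0 j (List.mem_cons_of_mem _ hj)])
    rw [line_deriv i _ hG] at key
    simp only [zero_smul, add_zero] at key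
    simp only [lderivC, List.map_cons, List.prod_cons]
    refine key.trans (le_of_eq ?_)
    rw [hK']; ring

lemma mono_exp (a : ℝ) (ha : 0 < a) (x : ℝ) (n : ℕ) :
    |x| ^ n * Real.exp (-(a / 2 * x ^ 2)) ≤ √(n.factorial) * (√a)⁻¹ ^ n := by
  have hsa : 0 < √a := Real.sqrt_pos.2 ha
  have h := Real.pow_div_factorial_le_exp (a * x ^ 2) (by positivity) n
  have hf : (0 : ℝ) < n.factorial := by positivity
  rw [div_le_iff₀ hf] at h
  have h2 : (√a * |x|) ^ n ≤ √(n.factorial) * Real.exp (a / 2 * x ^ 2) := by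
    rw [← pow_le_pow_iff_left₀ (by positivity) (by positivity) (two_ne_zero)]
    rw [mul_pow (√(n.factorial : ℝ)), Real.sq_sqrt hf.le, ← pow_mul, mul_comm n 2, pow_mul, mul_pow,
      Real.sq_sqrt ha.le, sq_abs, ← Real.exp_nat_mul]
    refine h.trans (le_of_eq ?_)
    rw [mul_comm]; congr 2; push_cast; ring
  rw [Real.exp_neg, inv_pow, ← div_eq_mul_inv, ← div_eq_mul_inv, div_le_div_iff₀ (by positivity)
    (by positivity), ← mul_pow, mul_comm]
  rw [mul_pow] at *
  linarith

lemma fact_div (n : ℕ) (τ : ℝ) (hτ : 0 < τ) :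
    (n.factorial : ℝ) / (√(n + 1) * τ) ^ n ≤ √(n.factorial) * τ⁻¹ ^ n := by
  have hf : (0 : ℝ) < n.factorial := by positivity
  have h1 : √(n.factorial : ℝ) ≤ √(n + 1 : ℝ) ^ n := by
    rw [← pow_le_pow_iff_left₀ (by positivity) (by positivity) (two_ne_zero), Real.sq_sqrt hf.le,
      ← pow_mul, mul_comm n 2, pow_mul, Real.sq_sqrt (by positivity)]
    exact_mod_cast (Nat.factorial_le_pow n).trans (Nat.pow_le_pow_left (Nat.le_succ n) n)
  rw [div_le_iff₀ (by positivity), mul_pow, inv_pow]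
  have : √(n.factorial : ℝ) * (τ ^ n)⁻¹ * (√(n + 1 : ℝ) ^ n * τ ^ n)
      = √(n.factorial : ℝ) * √(n + 1 : ℝ) ^ n := by field_simp
  rw [this]
  calc (n.factorial : ℝ) = √(n.factorial : ℝ) * √(n.factorial : ℝ) :=
        (Real.mul_self_sqrt hf.le).symm
    _ ≤ _ := by gcongr

/-- Complexified quadratic form. -/
noncomputable def qC {N : ℕ} (A : Matrix (Fin N) (Fin N) ℂ) (z : Fin N → ℂ) : ℂ :=
  ∑ i, z i * A.mulVec z i

lemma bilin_bound {N : ℕ} (A : Matrix (Fin N) (Fin N) ℂ) (M : ℝ)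
    (hM : ∑ i, ∑ j, ‖A i j‖ ≤ M) (u v : Fin N → ℂ) (a b : ℝ) (ha : 0 ≤ a) (hb : 0 ≤ b)
    (hu : ∀ i, ‖u i‖ ≤ a) (hv : ∀ i, ‖v i‖ ≤ b) :
    ‖∑ i, u i * A.mulVec v i‖ ≤ M * (a * b) := by
  calc ‖∑ i, u i * A.mulVec v i‖ ≤ ∑ i, ∑ j, ‖A i j‖ * (a * b) := by
        refine (norm_sum_le _ _).trans (Finset.sum_le_sum fun i _ => ?_)
        rw [Matrix.mulVec, dotProduct, Finset.mul_sum]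
        refine (norm_sum_le _ _).trans (Finset.sum_le_sum fun j _ => ?_)
        rw [norm_mul, norm_mul]
        calc ‖u i‖ * (‖A i j‖ * ‖v j‖) = ‖A i j‖ * (‖u i‖ * ‖v j‖) := by ring
          _ ≤ _ := by gcongr; exacts [hu i, hv j]
    _ = (∑ i, ∑ j, ‖A i j‖) * (a * b) := by simp only [Finset.sum_mul]
    _ ≤ _ := by gcongr

lemma qC_add {N : ℕ} (A : Matrix (Fin N) (Fin N) ℂ) (x w : Fin N → ℂ) :
    qC A (x + w) = qC A x + ((∑ i, x i * A.mulVec w i) + (∑ i, w i * A.mulVec x i)) + qC A w := by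
  simp only [qC, Matrix.mulVec_add, Pi.add_apply, ← Finset.sum_add_distrib]
  refine Finset.sum_congr rfl fun i _ => ?_
  ring

lemma qC_contDiff {N : ℕ} (A : Matrix (Fin N) (Fin N) ℂ) :
    ContDiff ℂ (⊤ : ℕ∞) (fun z => Complex.exp (-(qC A z))) := by
  unfold qC Matrix.mulVec dotProduct
  fun_prop

lemma qC_lower {N : ℕ} (A : Matrix (Fin N) (Fin N) ℂ) (M : ℝ) (hM0 : 0 ≤ M)
    (hM : ∑ i, ∑ j, ‖A i j‖ ≤ M) (d : ℝ) (hd : 0 < d) (X : EuclideanSpace ℝ (Fin N))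
    (hX : d * ‖X‖ ^ 2 ≤ (qC A (embC N X)).re) (w : Fin N → ℂ) (R : ℝ) (hR : 0 ≤ R)
    (hw : ∀ j, ‖w j‖ ≤ R) :
    d / 2 * ‖X‖ ^ 2 - (M + 2 * M ^ 2 / d) * R ^ 2 ≤ (qC A (embC N X + w)).re := by
  have hXi : ∀ i, ‖embC N X i‖ ≤ ‖X‖ := by
    intro i
    rw [embC_apply, Complex.norm_real]
    exact PiLp.norm_apply_le X i
  have h1 := bilin_bound A M hM _ _ _ _ (norm_nonneg X) hR hXi hw
  have h2 := bilin_bound A M hM _ _ _ _ hR (norm_nonneg X) hw hXi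
  have h3 := bilin_bound A M hM _ _ _ _ hR hR hw hw
  rw [qC_add, Complex.add_re, Complex.add_re, Complex.add_re]
  have h1' := (abs_le.1 ((Complex.abs_re_le_norm _).trans h1)).1
  have h2' := (abs_le.1 ((Complex.abs_re_le_norm _).trans h2)).1
  have h3' : -(M * (R * R)) ≤ (qC A w).re := (abs_le.1 ((Complex.abs_re_le_norm _).trans h3)).1
  have h4 : 0 ≤ d / 2 * ‖X‖ ^ 2 - 2 * M * ‖X‖ * R + 2 * M ^ 2 / d * R ^ 2 := by
    have : d / 2 * ‖X‖ ^ 2 - 2 * M * ‖X‖ * R + 2 * M ^ 2 / d * R ^ 2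
        = (d * ‖X‖ - 2 * M * R) ^ 2 / (2 * d) := by field_simp; ring
    rw [this]; positivity
  nlinarith

/-- The bound for a fixed matrix. -/
lemma fixed_bound {N : ℕ} (A : Matrix (Fin N) (Fin N) ℂ) (M c : ℝ) (hM0 : 0 ≤ M)
    (hM : ∑ i, ∑ j, ‖A i j‖ ≤ M) (hc : 0 < c) (τ : ℝ) (hτ : 0 < τ) (hτ1 : τ ≤ 1)
    (hA : ∀ X : EuclideanSpace ℝ (Fin N), c * τ ^ 2 * ‖X‖ ^ 2 ≤ (qC A (embC N X)).re)
    (α β : Fin N → ℕ) (X : EuclideanSpace ℝ (Fin N)) :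
    ‖(∏ i, (X i : ℂ) ^ α i) *
        mderiv β ((fun z => Complex.exp (-(qC A z))) ∘ embC N) X‖
      ≤ Real.exp ((M + 2 * M ^ 2 / c) * (N + ∑ i, β i)) *
        (√(∏ i, (α i).factorial) * ((√c)⁻¹ * τ⁻¹) ^ (∑ i, α i)) *
        (√(∏ i, (β i).factorial) * τ⁻¹ ^ (∑ i, β i)) := by
  have hd : 0 < c * τ ^ 2 := by positivity
  set r : Fin N → ℝ := fun i => √((β i : ℝ) + 1) * τ with hr
  have hrpos : ∀ i, 0 < r i := fun i => by simp only [hr]; positivity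
  set E := Real.exp ((M + 2 * M ^ 2 / c) * (N + ∑ i, β i)) with hE
  have hR2 : ∑ i, r i ^ 2 = (N + ∑ i, (β i : ℝ)) * τ ^ 2 := by
    simp only [hr, mul_pow]
    rw [← Finset.sum_mul]
    congr 1
    rw [Finset.sum_congr rfl fun i _ => Real.sq_sqrt (by positivity : (0 : ℝ) ≤ (β i : ℝ) + 1)]
    rw [Finset.sum_add_distrib]; simp [add_comm]
  have hK : ∀ w : Fin N → ℂ, (∀ j, ‖w j‖ ≤ r j) →
      ‖(fun z => Complex.exp (-(qC A z))) (embC N X + w)‖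
        ≤ Real.exp (-(c * τ ^ 2 / 2 * ‖X‖ ^ 2)) * E := by
    intro w hw
    have h := qC_lower A M hM0 hM (c * τ ^ 2) hd X (hA X) w (√(∑ i, r i ^ 2))
      (Real.sqrt_nonneg _) (fun j => (hw j).trans (Real.le_sqrt_of_sq_le
        (Finset.single_le_sum (f := fun i => r i ^ 2) (fun i _ => sq_nonneg _)
          (Finset.mem_univ j))))
    rw [Real.sq_sqrt (Finset.sum_nonneg fun i _ => sq_nonneg _), hR2] at h
    simp only [Complex.norm_exp, Complex.neg_re]
    rw [hE, ← Real.exp_add]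
    apply Real.exp_le_exp.2
    have h5 : (M + 2 * M ^ 2 / (c * τ ^ 2)) * ((N + ∑ i, (β i : ℝ)) * τ ^ 2)
        ≤ (M + 2 * M ^ 2 / c) * (N + ∑ i, (β i : ℝ)) := by
      have : (M + 2 * M ^ 2 / (c * τ ^ 2)) * ((N + ∑ i, (β i : ℝ)) * τ ^ 2)
        = (M * τ ^ 2 + 2 * M ^ 2 / c) * (N + ∑ i, (β i : ℝ)) := by field_simp
      rw [this]
      have : τ ^ 2 ≤ 1 := pow_le_one₀ hτ.le hτ1
      gcongr
      nlinarith
    push_cast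
    linarith
  have hcau := cauchy_list β (qC_contDiff A) (embC N X) r hrpos _ hK (List.finRange N)
    (List.nodup_finRange N) 0 (fun j => by simpa using (hrpos j).le) (fun _ _ => rfl)
  rw [add_zero] at hcau
  rw [mderiv_comp β (qC_contDiff A), norm_mul, Function.comp_apply]
  have hprod : ((List.finRange N).map fun i => ((β i).factorial : ℝ) / r i ^ β i).prod
      = ∏ i, ((β i).factorial : ℝ) / r i ^ β i := by
    rw [← List.ofFn_eq_map, List.prod_ofFn]
  rw [hprod] at hcau
  have hb : ∏ i, ((β i).factorial : ℝ) / r i ^ β i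
      ≤ √(∏ i, (β i).factorial) * τ⁻¹ ^ (∑ i, β i) := by
    calc _ ≤ ∏ i, √((β i).factorial : ℝ) * τ⁻¹ ^ β i :=
          Finset.prod_le_prod (fun i _ => by have := hrpos i; positivity)
            fun i _ => fact_div _ _ hτ
      _ = _ := by
          rw [Finset.prod_mul_distrib, Finset.prod_pow_eq_pow_sum,
            Real.sqrt_prod _ (fun i _ => by positivity)]
  have ha : ‖∏ i, (X i : ℂ) ^ α i‖ * Real.exp (-(c * τ ^ 2 / 2 * ‖X‖ ^ 2))
      ≤ √(∏ i, (α i).factorial) * ((√c)⁻¹ * τ⁻¹) ^ (∑ i, α i) := by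
    have e1 : -(c * τ ^ 2 / 2 * ‖X‖ ^ 2) = ∑ i, -(c * τ ^ 2 / 2 * X i ^ 2) := by
      rw [EuclideanSpace.norm_sq_eq, Finset.mul_sum, Finset.sum_neg_distrib]; simp
    rw [e1, Real.exp_sum, norm_prod, ← Finset.prod_mul_distrib]
    calc _ ≤ ∏ i, √((α i).factorial : ℝ) * (√(c * τ ^ 2))⁻¹ ^ α i := by
          refine Finset.prod_le_prod (fun i _ => by positivity) fun i _ => ?_
          rw [norm_pow, Complex.norm_real, Real.norm_eq_abs]
          exact mono_exp _ hd _ _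
      _ = _ := by
          rw [Finset.prod_mul_distrib, Finset.prod_pow_eq_pow_sum,
            Real.sqrt_prod _ (fun i _ => by positivity), Real.sqrt_mul hc.le, Real.sqrt_sq hτ.le,
            mul_inv]
  calc _ ≤ ‖∏ i, (X i : ℂ) ^ α i‖ * (Real.exp (-(c * τ ^ 2 / 2 * ‖X‖ ^ 2)) * E *
        (√(∏ i, (β i).factorial) * τ⁻¹ ^ (∑ i, β i))) := by
        refine mul_le_mul_of_nonneg_left (hcau.trans ?_) (norm_nonneg _)
        exact mul_le_mul_of_nonneg_left hb (by positivity)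
    _ = E * (‖∏ i, (X i : ℂ) ^ α i‖ * Real.exp (-(c * τ ^ 2 / 2 * ‖X‖ ^ 2))) *
        (√(∏ i, (β i).factorial) * τ⁻¹ ^ (∑ i, β i)) := by ring
    _ ≤ _ := by gcongr

/-- Gelfand–Shilov type pointwise bounds for `X^α ∂_X^β (e^{-q_t})`, where
`q_t(X) = ⟨X, Q(t)X⟩` is a time-dependent complex-valued quadratic form on `ℝ^N` with
`Re q_t(X) ≥ c t^k |X|²` on `[0, T*]`, and `s = 5N/4 + 2⌊N/2⌋ + 2`. -/
theorem statement_1 (N : ℕ) (hN : 1 ≤ N) (T Tstar c : ℝ) (k : ℕ)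
    (hT : 0 < T) (hTstar : 0 < Tstar) (hTstarT : Tstar < T) (hc : 0 < c) (hk : 1 ≤ k)
    (Q : ℝ → Matrix (Fin N) (Fin N) ℂ)
    (hQcont : ContinuousOn Q (Set.Icc 0 T))
    (hQsymm : ∀ t ∈ Set.Icc (0 : ℝ) T, (Q t).IsSymm)
    (q : ℝ → EuclideanSpace ℝ (Fin N) → ℂ)
    (hq : ∀ t X, q t X = ∑ i, (X i : ℂ) * (Q t).mulVec (fun j => (X j : ℂ)) i)
    (hcoer : ∀ t ∈ Set.Icc (0 : ℝ) Tstar, ∀ X : EuclideanSpace ℝ (Fin N),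
      c * t ^ k * ‖X‖ ^ 2 ≤ (q t X).re) :
    ∃ t₀ ∈ Set.Ioo (0 : ℝ) (min 1 Tstar), ∃ C > (1 : ℝ),
      ∀ α β : Fin N → ℕ, ∀ t ∈ Set.Ioo (0 : ℝ) t₀, ∀ X : EuclideanSpace ℝ (Fin N),
        ‖(∏ i, (X i : ℂ) ^ α i) * mderiv β (fun Y => Complex.exp (-(q t Y))) X‖
          ≤ C ^ (1 + (∑ i, α i) + ∑ i, β i)
              / t ^ ((k : ℝ) / 2 * ((∑ i, α i) + 2 * (∑ i, β i)
                  + ((5 * N : ℝ) / 4 + 2 * (N / 2 : ℕ) + 2)))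
              * Real.sqrt (∏ i, Nat.factorial (α i)) * Real.sqrt (∏ i, Nat.factorial (β i)) := by
  obtain ⟨M, hM⟩ := (isCompact_Icc (a := (0 : ℝ)) (b := T)).exists_bound_of_continuousOn
    (f := fun t => ∑ i, ∑ j, ‖Q t i j‖) (by
      refine continuousOn_finsetSum _ fun i _ => continuousOn_finsetSum _ fun j _ => ?_
      exact ((continuous_id.matrix_elem i j).comp_continuousOn hQcont).norm)
  have hM0 : 0 ≤ M := (norm_nonneg _).trans (hM 0 ⟨le_rfl, hT.le⟩)
  set B := M + 2 * M ^ 2 / c with hB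
  have hB0 : 0 ≤ B := by positivity
  have hmin : 0 < min 1 Tstar := lt_min one_pos hTstar
  refine ⟨min 1 Tstar / 2, ⟨by positivity, by linarith⟩,
    1 + Real.exp (B * N) + Real.exp B + (√c)⁻¹, ?_, ?_⟩
  · have := Real.exp_pos (B * N)
    have := Real.exp_pos B
    have : 0 ≤ (√c)⁻¹ := by positivity
    linarith
  intro α β t ht X
  have ht0 : 0 < t := ht.1
  have htm : t < min 1 Tstar := by have := ht.2; linarith
  have ht1 : t < 1 := htm.trans_le (min_le_left _ _)
  have htT : t < Tstar := htm.trans_le (min_le_right _ _)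
  set C := 1 + Real.exp (B * N) + Real.exp B + (√c)⁻¹ with hC
  have p1 := Real.exp_pos (B * N)
  have p2 := Real.exp_pos B
  have p3 : 0 ≤ (√c)⁻¹ := by positivity
  have hqC : ∀ Y, q t Y = qC (Q t) (embC N Y) := by
    intro Y
    rw [hq, qC]
    have : embC N Y = fun j => (Y j : ℂ) := funext fun j => embC_apply Y j
    rw [this]
  set τ : ℝ := t ^ ((k : ℝ) / 2) with hτ
  have hτ0 : 0 < τ := Real.rpow_pos_of_pos ht0 _
  have hτ1 : τ ≤ 1 := Real.rpow_le_one ht0.le ht1.le (by positivity)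
  have hτ2 : τ ^ 2 = t ^ k := by
    rw [hτ, ← Real.rpow_natCast, ← Real.rpow_mul ht0.le, ← Real.rpow_natCast]
    congr 1; push_cast; ring
  have hfun : (fun Y => Complex.exp (-(q t Y)))
      = (fun z => Complex.exp (-(qC (Q t) z))) ∘ embC N := by
    ext Y; simp [hqC]
  have main := fixed_bound (Q t) M c hM0
    ((le_abs_self _).trans (hM t ⟨ht0.le, (htT.trans hTstarT).le⟩)) hc τ hτ0 hτ1
    (fun Y => by rw [hτ2, ← hqC]; exact hcoer t ⟨ht0.le, htT.le⟩ Y) α β X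
  rw [hfun]
  refine main.trans ?_
  set a := ∑ i, α i with ha
  set b := ∑ i, β i with hb
  have hexp : Real.exp (B * (N + (b : ℕ))) = Real.exp (B * N) * Real.exp B ^ b := by
    rw [mul_add, Real.exp_add, mul_comm B (b : ℝ), Real.exp_nat_mul]
  have hconst : Real.exp (B * N) * Real.exp B ^ b * (√c)⁻¹ ^ a ≤ C ^ (1 + a + b) := by
    calc _ ≤ C * C ^ b * C ^ a := by gcongr <;> linarith
      _ = _ := by ring
  have hpow : τ⁻¹ ^ a * τ⁻¹ ^ b ≤ (t ^ ((k : ℝ) / 2 * ((a : ℝ) + 2 * (b : ℝ)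
                  + ((5 * N : ℝ) / 4 + 2 * (N / 2 : ℕ) + 2))))⁻¹ := by
    rw [← pow_add, inv_pow]
    apply inv_anti₀ (Real.rpow_pos_of_pos ht0 _)
    rw [hτ, ← Real.rpow_natCast, ← Real.rpow_mul ht0.le]
    apply Real.rpow_le_rpow_of_exponent_ge ht0 ht1.le
    apply mul_le_mul_of_nonneg_left _ (by positivity)
    push_cast
    have : (0 : ℝ) ≤ (5 * N : ℝ) / 4 + 2 * (N / 2 : ℕ) + 2 := by positivity
    have : (0 : ℝ) ≤ b := by positivity
    linarith
  rw [hexp]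
  calc _ = (Real.exp (B * N) * Real.exp B ^ b * (√c)⁻¹ ^ a) * (τ⁻¹ ^ a * τ⁻¹ ^ b)
        * √(∏ i, (α i).factorial) * √(∏ i, (β i).factorial) := by
        rw [mul_pow]; ring
    _ ≤ C ^ (1 + a + b) * (t ^ ((k : ℝ) / 2 * ((a : ℝ) + 2 * (b : ℝ)
                  + ((5 * N : ℝ) / 4 + 2 * (N / 2 : ℕ) + 2))))⁻¹
        * √(∏ i, (α i).factorial) * √(∏ i, (β i).factorial) := by
        gcongr
    _ = _ := by
        simp only [ha, hb, Nat.cast_sum, Nat.cast_prod, div_eq_mul_inv]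
end

section
/- Let F ∈ M_n(ℂ) be a complex n×n matrix and K ≥ 0 be a non-negative integer. Then for all X ∈ ℂ^n satisfying (Re F)(F^k X) = 0 for every k ∈ {0,…,K}, one has (Re F)(Im F)^k X = 0 for every k ∈ {0,…,K}. -/
noncomputable section

/-- The real part `Re F` of a complex matrix, viewed as a complex matrix. -/
def matRe {ι : Type*} (F : Matrix ι ι ℂ) : Matrix ι ι ℂ := F.map fun z => ((z.re : ℝ) : ℂ)

/-- The imaginary part `Im F` of a complex matrix, viewed as a complex matrix. -/
def matIm {ι : Type*} (F : Matrix ι ι ℂ) : Matrix ι ι ℂ := F.map fun z => ((z.im : ℝ) : ℂ)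

end

/-- Let `F` be a complex `n×n` matrix and `K ≥ 0`. If `X ∈ ℂ^n`
satisfies `(Re F)(F^k X) = 0` for every `k ∈ {0,…,K}`, then `(Re F)(Im F)^k X = 0`
for every `k ∈ {0,…,K}`. -/
theorem statement_3 (n : ℕ) (F : Matrix (Fin n) (Fin n) ℂ) (K : ℕ) (X : Fin n → ℂ)
    (hX : ∀ k ≤ K, (matRe F).mulVec ((F ^ k).mulVec X) = 0) :
    ∀ k ≤ K, (matRe F * matIm F ^ k).mulVec X = 0 := by
  have hF : F = matRe F + Complex.I • matIm F := by
    ext i j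
    simp only [matRe, matIm, Matrix.add_apply, Matrix.smul_apply, Matrix.map_apply, smul_eq_mul]
    rw [mul_comm, Complex.re_add_im]
  have key : ∀ k ≤ K, (F ^ k).mulVec X = Complex.I ^ k • (matIm F ^ k).mulVec X := by
    intro k
    induction k with
    | zero => intro _; simp
    | succ k ih =>
      intro hk
      have h1 := ih (by omega)
      have h2 := hX k (by omega)
      have h3 : (F ^ (k + 1)).mulVec X = F.mulVec ((F ^ k).mulVec X) := by
        rw [Matrix.mulVec_mulVec, pow_succ']
      have h4 : F.mulVec ((F ^ k).mulVec X)
          = (matRe F + Complex.I • matIm F).mulVec ((F ^ k).mulVec X) := by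
        rw [← hF]
      rw [h3, h4, Matrix.add_mulVec, h2, zero_add, h1, Matrix.smul_mulVec, Matrix.mulVec_smul,
        Matrix.mulVec_mulVec, ← pow_succ', smul_smul, ← pow_succ']
  intro k hk
  have h := hX k hk
  rw [key k hk, Matrix.mulVec_smul, Matrix.mulVec_mulVec] at h
  exact (smul_eq_zero.mp h).resolve_left (pow_ne_zero _ Complex.I_ne_zero)
end

section
/- There exists a positive constant C > 1 depending only on the dimension N such that for all constants 0 < c₁ < 1, 0 < c₂ < 1, C₁ > 0, C₂ > 0 and every Schwartz function f ∈ 𝒮(ℝ^N) satisfying |f(x)| ≤ C₁ e^{−c₁|x|²} for all x ∈ ℝ^N and |f̂(ξ)| ≤ C₂ e^{−c₂|ξ|²} for all ξ ∈ ℝ^N, one has for all multi-indices α, β ∈ ℕ^N: sup_{x∈ℝ^N} |x^α ∂_x^β f(x)| ≤ C^{1+|α|+|β|} · [ C₁ c₁^{−(|α|+N/4)} · C₂ c₂^{−(|β|+⌊N/2⌋+1+N/4)} · α! · β! ]^{1/2}. -/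
open MeasureTheory

/-- Approximation of `(iθ)^n` by exponential polynomials. -/
lemma approx_one (n : ℕ) : ∃ b : ℕ → ℂ, (∀ k, ‖b k‖ ≤ 2 ^ k) ∧
    ∀ (m : ℕ) (θ : ℝ), |θ| ≤ 1 / 4 →
      ‖∑ k ∈ Finset.range m, b k * (Complex.exp (Complex.I * θ) - 1) ^ k - (Complex.I * θ) ^ n‖
        ≤ 2 * 2 ^ m * |θ| ^ m := by
  have hslit : ∀ z : ℂ, ‖z‖ ≤ 1 / 2 → 1 + z ∈ Complex.slitPlane := by
    intro z hz
    left
    have := (Complex.abs_re_le_norm z).trans hz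
    have := (abs_le.1 this).1
    simp only [Complex.add_re, Complex.one_re]
    linarith
  set F : ℂ → ℂ := fun z => Complex.log (1 + z) ^ n with hF
  have hdiff : DifferentiableOn ℂ F (Metric.closedBall 0 (1 / 2)) := by
    intro z hz
    have hz' : ‖z‖ ≤ 1 / 2 := by simpa using hz
    have : DifferentiableAt ℂ F z :=
      (((differentiableAt_const _).add differentiableAt_id).clog (hslit z hz')).pow n
    exact this.differentiableWithinAt
  have hdc : DiffContOnCl ℂ F (Metric.ball 0 (1 / 2)) := by
    apply DifferentiableOn.diffContOnCl
    rw [closure_ball _ (by norm_num)]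
    exact hdiff
  have hbd : ∀ z ∈ Metric.sphere (0 : ℂ) (1 / 2), ‖F z‖ ≤ 1 := by
    intro z hz
    have hz' : ‖z‖ = 1 / 2 := by simpa using hz
    have := Complex.norm_log_one_add_half_le_self hz'.le
    rw [hF]
    simp only [norm_pow]
    apply pow_le_one₀ (norm_nonneg _)
    rw [hz'] at this
    linarith
  refine ⟨fun k => (k.factorial : ℂ)⁻¹ * iteratedDeriv k F 0, ?_, ?_⟩
  · intro k
    have := Complex.norm_iteratedDeriv_le_of_forall_mem_sphere_norm_le k (by norm_num) hdc hbd
    have hk : (0 : ℝ) < k.factorial := by exact_mod_cast k.factorial_pos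
    rw [norm_mul, norm_inv, Complex.norm_natCast, inv_mul_le_iff₀ hk]
    refine this.trans (le_of_eq ?_)
    simp
  · intro m θ hθ
    have hb : ∀ k, ‖(k.factorial : ℂ)⁻¹ * iteratedDeriv k F 0‖ ≤ 2 ^ k := by
      intro k
      have := Complex.norm_iteratedDeriv_le_of_forall_mem_sphere_norm_le k (by norm_num) hdc hbd
      have hk : (0 : ℝ) < k.factorial := by exact_mod_cast k.factorial_pos
      rw [norm_mul, norm_inv, Complex.norm_natCast, inv_mul_le_iff₀ hk]
      refine this.trans (le_of_eq ?_)
      simp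
    set u : ℂ := Complex.exp (Complex.I * θ) - 1 with hu
    have hun : ‖u‖ ≤ |θ| := by
      have := Real.norm_exp_I_mul_ofReal_sub_one_le (x := θ)
      simpa using this
    have hFu : F u = (Complex.I * θ) ^ n := by
      have hpi := Real.pi_gt_three
      have h2 := abs_le.1 hθ
      simp only [hF, hu]
      rw [add_sub_cancel, Complex.log_exp]
      · simp; linarith
      · simp; linarith
    have hs := Complex.hasSum_taylorSeries_on_ball (c := 0) (z := u) (hdiff.mono Metric.ball_subset_closedBall)
      (by simp; linarith)
    have hs' : HasSum (fun k : ℕ => (k.factorial : ℂ)⁻¹ * iteratedDeriv k F 0 * u ^ k) (F u) := by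
      have h3 : (fun k : ℕ => (k.factorial : ℂ)⁻¹ * iteratedDeriv k F 0 * u ^ k)
          = fun k : ℕ => (k.factorial : ℂ)⁻¹ • (u - 0) ^ k • iteratedDeriv k F 0 := by
        ext k
        simp only [smul_eq_mul, sub_zero]
        ring
      rw [h3]
      exact hs
    have htail := (hasSum_nat_add_iff' m).2 hs'
    rw [← hFu, norm_sub_rev, ← htail.tsum_eq]
    have hx : 2 * |θ| ≤ 1 / 2 := by linarith
    have hg : HasSum (fun k : ℕ => (2 * |θ|) ^ m * (1 / 2 : ℝ) ^ k) ((2 * |θ|) ^ m * 2) :=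
      hasSum_geometric_two.mul_left _
    refine (tsum_of_norm_bounded hg ?_).trans (le_of_eq ?_)
    · intro k
      rw [norm_mul, norm_pow]
      calc _ ≤ 2 ^ (k + m) * |θ| ^ (k + m) := by
            gcongr
            exact hb _
        _ = (2 * |θ|) ^ m * (2 * |θ|) ^ k := by rw [← mul_pow, pow_add]; ring
        _ ≤ _ := by gcongr
    · rw [mul_pow]; ring

lemma telescoping {ι : Type*} (s : Finset ι) (φ ψ : ι → ℂ) (D : ι → ℝ) (β : ι → ℕ) (n : ℕ) (T : ℝ)
    (hT : 0 ≤ T) (hT1 : T ≤ 1) (hD : ∀ i, 0 ≤ D i) (hψ : ∀ i, ‖ψ i‖ ≤ T ^ β i)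
    (he : ∀ i, ‖φ i - ψ i‖ ≤ D i * T ^ (β i + n)) :
    ‖∏ i ∈ s, φ i - ∏ i ∈ s, ψ i‖ ≤ (∏ i ∈ s, (1 + D i) - 1) * T ^ (∑ i ∈ s, β i + n) := by
  classical
  induction s using Finset.induction_on with
  | empty => simp
  | insert a s ha ih =>
    rw [Finset.prod_insert ha, Finset.prod_insert ha, Finset.prod_insert ha, Finset.sum_insert ha]
    have h1 : φ a * ∏ i ∈ s, φ i - ψ a * ∏ i ∈ s, ψ i
        = φ a * (∏ i ∈ s, φ i - ∏ i ∈ s, ψ i) + (φ a - ψ a) * ∏ i ∈ s, ψ i := by ring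
    have h2 : ‖φ a‖ ≤ (1 + D a) * T ^ β a := by
      calc ‖φ a‖ = ‖ψ a + (φ a - ψ a)‖ := by ring_nf
        _ ≤ T ^ β a + D a * T ^ (β a + n) := (norm_add_le _ _).trans (add_le_add (hψ a) (he a))
        _ ≤ T ^ β a + D a * T ^ β a := by
          have := pow_le_pow_of_le_one hT hT1 (Nat.le_add_right (β a) n)
          have := mul_le_mul_of_nonneg_left this (hD a)
          linarith
        _ = _ := by ring
    have h3 : ‖∏ i ∈ s, ψ i‖ ≤ T ^ (∑ i ∈ s, β i) := by
      rw [norm_prod, ← Finset.prod_pow_eq_pow_sum]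
      exact Finset.prod_le_prod (fun _ _ => norm_nonneg _) (fun i _ => hψ i)
    have hDa := hD a
    rw [h1]
    calc _ ≤ ‖φ a‖ * ‖∏ i ∈ s, φ i - ∏ i ∈ s, ψ i‖ + ‖φ a - ψ a‖ * ‖∏ i ∈ s, ψ i‖ := by
          refine (norm_add_le _ _).trans ?_
          rw [norm_mul, norm_mul]
      _ ≤ ((1 + D a) * T ^ β a) * ((∏ i ∈ s, (1 + D i) - 1) * T ^ (∑ i ∈ s, β i + n))
          + (D a * T ^ (β a + n)) * T ^ (∑ i ∈ s, β i) := by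
          gcongr
          exact he a
      _ = _ := by
          simp only [pow_add]; ring

/-- `φ` acts boundedly on functions given by Fourier integrals which are bounded on `Y`. -/
def ActsBdd {N : ℕ} (Y : Set (EuclideanSpace ℝ (Fin N))) (φ : EuclideanSpace ℝ (Fin N) → ℂ)
    (B : ℝ) : Prop :=
  ∀ F : EuclideanSpace ℝ (Fin N) → ℂ, Integrable F → ∀ M : ℝ,
    (∀ y ∈ Y, ‖∫ ζ, Complex.exp (↑(2 * Real.pi * inner ℝ ζ y) * Complex.I) * F ζ‖ ≤ M) →
    Integrable (fun ζ => φ ζ * F ζ) ∧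
    ∀ y ∈ Y, ‖∫ ζ, Complex.exp (↑(2 * Real.pi * inner ℝ ζ y) * Complex.I) * (φ ζ * F ζ)‖ ≤ B * M

lemma integrable_exp_mul {N : ℕ} (y : EuclideanSpace ℝ (Fin N)) {F : EuclideanSpace ℝ (Fin N) → ℂ}
    (hF : Integrable F) :
    Integrable (fun ζ => Complex.exp (↑(2 * Real.pi * inner ℝ ζ y) * Complex.I) * F ζ) := by
  refine hF.bdd_mul (c := 1) ?_ ?_
  · apply Continuous.aestronglyMeasurable
    fun_prop
  · filter_upwards with ζ
    rw [Complex.norm_exp_ofReal_mul_I]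

lemma ActsBdd.one {N : ℕ} (Y : Set (EuclideanSpace ℝ (Fin N))) : ActsBdd Y (fun _ => 1) 1 := by
  intro F hF M h
  simpa only [one_mul] using And.intro hF h

lemma ActsBdd.zero {N : ℕ} (Y : Set (EuclideanSpace ℝ (Fin N))) : ActsBdd Y (fun _ => 0) 0 := by
  intro F hF M h
  simp

lemma ActsBdd.mul {N : ℕ} {Y : Set (EuclideanSpace ℝ (Fin N))}
    {φ ψ : EuclideanSpace ℝ (Fin N) → ℂ} {A B : ℝ}
    (h1 : ActsBdd Y φ A) (h2 : ActsBdd Y ψ B) : ActsBdd Y (fun ζ => φ ζ * ψ ζ) (A * B) := by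
  intro F hF M h
  obtain ⟨i2, b2⟩ := h2 F hF M h
  have := h1 _ i2 _ b2
  simpa only [mul_assoc] using this

lemma ActsBdd.add {N : ℕ} {Y : Set (EuclideanSpace ℝ (Fin N))}
    {φ ψ : EuclideanSpace ℝ (Fin N) → ℂ} {A B : ℝ}
    (h1 : ActsBdd Y φ A) (h2 : ActsBdd Y ψ B) : ActsBdd Y (fun ζ => φ ζ + ψ ζ) (A + B) := by
  intro F hF M h
  obtain ⟨i1, b1⟩ := h1 F hF M h
  obtain ⟨i2, b2⟩ := h2 F hF M h
  simp only [add_mul, mul_add]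
  refine ⟨i1.add i2, fun y hy => ?_⟩
  rw [integral_add (integrable_exp_mul y i1) (integrable_exp_mul y i2)]
  exact (norm_add_le _ _).trans (add_le_add (b1 y hy) (b2 y hy))

lemma ActsBdd.smul {N : ℕ} {Y : Set (EuclideanSpace ℝ (Fin N))}
    {φ : EuclideanSpace ℝ (Fin N) → ℂ} {A : ℝ} (c : ℂ) {C : ℝ} (hc : ‖c‖ ≤ C)
    (h1 : ActsBdd Y φ A) : ActsBdd Y (fun ζ => c * φ ζ) (C * A) := by
  intro F hF M h
  obtain ⟨i1, b1⟩ := h1 F hF M h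
  have e1 : ∀ ζ, c * φ ζ * F ζ = c * (φ ζ * F ζ) := fun ζ => mul_assoc _ _ _
  simp only [e1]
  refine ⟨i1.const_mul c, fun y hy => ?_⟩
  simp only [mul_left_comm _ c]
  rw [integral_const_mul, norm_mul]
  rw [mul_assoc]
  exact mul_le_mul hc (b1 y hy) (norm_nonneg _) ((norm_nonneg _).trans hc)

lemma ActsBdd.pow {N : ℕ} {Y : Set (EuclideanSpace ℝ (Fin N))}
    {φ : EuclideanSpace ℝ (Fin N) → ℂ} {A : ℝ} (h : ActsBdd Y φ A) (k : ℕ) :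
    ActsBdd Y (fun ζ => φ ζ ^ k) (A ^ k) := by
  induction k with
  | zero => simpa using ActsBdd.one Y
  | succ k ih => simpa only [pow_succ] using ih.mul h

lemma ActsBdd.sum {N : ℕ} {ι : Type*} {Y : Set (EuclideanSpace ℝ (Fin N))} (s : Finset ι)
    {φ : ι → EuclideanSpace ℝ (Fin N) → ℂ} {A : ι → ℝ} (h : ∀ i, ActsBdd Y (φ i) (A i)) :
    ActsBdd Y (fun ζ => ∑ i ∈ s, φ i ζ) (∑ i ∈ s, A i) := by
  classical
  induction s using Finset.induction_on with
  | empty => simpa using ActsBdd.zero Y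
  | insert a s ha ih => simpa only [Finset.sum_insert ha] using (h a).add ih

lemma ActsBdd.prod {N : ℕ} {ι : Type*} {Y : Set (EuclideanSpace ℝ (Fin N))} (s : Finset ι)
    {φ : ι → EuclideanSpace ℝ (Fin N) → ℂ} {A : ι → ℝ} (h : ∀ i, ActsBdd Y (φ i) (A i)) :
    ActsBdd Y (fun ζ => ∏ i ∈ s, φ i ζ) (∏ i ∈ s, A i) := by
  classical
  induction s using Finset.induction_on with
  | empty => simpa using ActsBdd.one Y
  | insert a s ha ih => simpa only [Finset.prod_insert ha] using (h a).mul ih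

lemma ActsBdd.exp {N : ℕ} {Y : Set (EuclideanSpace ℝ (Fin N))} (v : EuclideanSpace ℝ (Fin N))
    (hv : ∀ y ∈ Y, y + v ∈ Y) :
    ActsBdd Y (fun ζ => Complex.exp (Complex.I * ↑(2 * Real.pi * inner ℝ ζ v))) 1 := by
  intro F hF M h
  refine ⟨?_, fun y hy => ?_⟩
  · simpa only [mul_comm Complex.I] using integrable_exp_mul v hF
  · rw [one_mul]
    convert h (y + v) (hv y hy) using 4 with ζ
    rw [← mul_assoc, ← Complex.exp_add, inner_add_right]
    congr 2
    push_cast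
    ring

/-- Fourier representation of iterated derivatives. -/
lemma pderiv_iter_fourier {N : ℕ} (i : Fin N) (k : ℕ)
    (f : SchwartzMap (EuclideanSpace ℝ (Fin N)) ℂ) :
    ∃ g : SchwartzMap (EuclideanSpace ℝ (Fin N)) ℂ, (pderivE i)^[k] (fun y => f y) = (fun y => g y) ∧
      ∀ ζ, FourierTransform.fourier g ζ
        = (2 * Real.pi * Complex.I * (ζ i : ℂ)) ^ k * FourierTransform.fourier f ζ := by
  induction k with
  | zero => exact ⟨f, rfl, by simp⟩
  | succ k ih =>
    obtain ⟨g, hg, hg2⟩ := ih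
    refine ⟨LineDeriv.lineDerivOp (EuclideanSpace.single i (1 : ℝ)) g, ?_, ?_⟩
    · rw [Function.iterate_succ_apply', hg]
      rfl
    · intro ζ
      rw [SchwartzMap.fourier_lineDerivOp_eq]
      have : (fun x : EuclideanSpace ℝ (Fin N) =>
        inner ℝ x (EuclideanSpace.single i (1 : ℝ))).HasTemperateGrowth := by fun_prop
      have h4 : inner ℝ ζ (EuclideanSpace.single i (1 : ℝ)) = ζ i := by
        rw [EuclideanSpace.inner_single_right]; simp
      simp [SchwartzMap.smulLeftCLM_apply_apply this, hg2, h4]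
      ring

lemma mderiv_fourier {N : ℕ} (β : Fin N → ℕ) (f : SchwartzMap (EuclideanSpace ℝ (Fin N)) ℂ) :
    ∃ g : SchwartzMap (EuclideanSpace ℝ (Fin N)) ℂ, mderiv β (fun y => f y) = (fun y => g y) ∧
      ∀ ζ, FourierTransform.fourier g ζ
        = (∏ i, (2 * Real.pi * Complex.I * (ζ i : ℂ)) ^ β i) * FourierTransform.fourier f ζ := by
  have key : ∀ l : List (Fin N), ∃ g : SchwartzMap (EuclideanSpace ℝ (Fin N)) ℂ,
      (l.map (fun i => (pderivE i)^[β i])).foldr (· ∘ ·) id (fun y => f y) = (fun y => g y) ∧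
      ∀ ζ, FourierTransform.fourier g ζ
        = (l.map (fun i => (2 * Real.pi * Complex.I * (ζ i : ℂ)) ^ β i)).prod
          * FourierTransform.fourier f ζ := by
    intro l
    induction l with
    | nil => exact ⟨f, rfl, by simp⟩
    | cons a l ih =>
      obtain ⟨g, hg, hg2⟩ := ih
      obtain ⟨g', hg', hg2'⟩ := pderiv_iter_fourier a (β a) g
      refine ⟨g', ?_, ?_⟩
      · rw [← hg', ← hg]; rfl
      · intro ζ
        rw [hg2', hg2, List.map_cons, List.prod_cons]
        ring
  obtain ⟨g, hg, hg2⟩ := key (List.finRange N)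
  refine ⟨g, ?_, ?_⟩
  · rw [← hg, mderiv, List.ofFn_eq_map]
  · intro ζ
    rw [hg2, ← List.ofFn_eq_map, List.prod_ofFn]

lemma schwartz_inversion {N : ℕ} (g : SchwartzMap (EuclideanSpace ℝ (Fin N)) ℂ)
    (y : EuclideanSpace ℝ (Fin N)) :
    g y = ∫ ζ, Complex.exp (↑(2 * Real.pi * inner ℝ ζ y) * Complex.I)
      * FourierTransform.fourier g ζ := by
  have h := FourierPair.fourierInv_fourier_eq (E := SchwartzMap (EuclideanSpace ℝ (Fin N)) ℂ)
    (F := SchwartzMap (EuclideanSpace ℝ (Fin N)) ℂ) g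
  have h2 : g y = FourierTransformInv.fourierInv (FourierTransform.fourier g) y := by rw [h]
  rw [h2, SchwartzMap.fourierInv_coe, Real.fourierInv_eq']
  simp only [smul_eq_mul]

lemma fourier_bound {N : ℕ} (f : SchwartzMap (EuclideanSpace ℝ (Fin N)) ℂ) (C₂ c₂ : ℝ)
    (h : ∀ ξ : EuclideanSpace ℝ (Fin N),
            ‖∫ x : EuclideanSpace ℝ (Fin N),
                Complex.exp (-(Complex.I * ∑ i, (x i : ℂ) * (ξ i : ℂ))) * f x‖
              ≤ C₂ * Real.exp (-c₂ * ‖ξ‖ ^ 2)) (ζ : EuclideanSpace ℝ (Fin N)) :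
    ‖FourierTransform.fourier f ζ‖ ≤ C₂ * Real.exp (-c₂ * (2 * Real.pi * ‖ζ‖) ^ 2) := by
  have := h ((2 * Real.pi) • ζ)
  rw [norm_smul, Real.norm_of_nonneg (by positivity)] at this
  rw [SchwartzMap.fourier_coe, Real.fourier_eq']
  refine le_trans (le_of_eq ?_) this
  congr 1
  refine integral_congr_ae (Filter.Eventually.of_forall fun x => ?_)
  simp only [smul_eq_mul]
  congr 2
  rw [PiLp.inner_apply]
  simp [Finset.mul_sum, Finset.sum_mul]
  congr 1
  ext i
  ring

lemma factorial_sum_le {ι : Type*} (s : Finset ι) (β : ι → ℕ) :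
    ((∑ i ∈ s, β i).factorial : ℝ) ≤ 2 ^ (s.card * ∑ i ∈ s, β i) * ∏ i ∈ s, ((β i).factorial : ℝ) := by
  classical
  induction s using Finset.induction_on with
  | empty => simp
  | insert a s ha ih =>
    rw [Finset.sum_insert ha, Finset.prod_insert ha, Finset.card_insert_of_notMem ha]
    set t := ∑ i ∈ s, β i
    have h1 : ((β a + t).factorial : ℝ) ≤ 2 ^ (β a + t) * ((β a).factorial * t.factorial) := by
      have := Nat.add_choose_mul_factorial_mul_factorial (β a) t
      have h2 := Nat.choose_le_two_pow (β a + t) t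
      rw [← this]
      push_cast
      rw [mul_assoc]
      gcongr
      exact_mod_cast h2
    calc _ ≤ (2 : ℝ) ^ (β a + t) * ((β a).factorial * (2 ^ (s.card * t) * ∏ i ∈ s, ((β i).factorial : ℝ))) := by
          refine h1.trans ?_
          gcongr
      _ = 2 ^ (β a + t + s.card * t) * ((β a).factorial * ∏ i ∈ s, ((β i).factorial : ℝ)) := by
          rw [pow_add]; ring
      _ ≤ _ := by
          gcongr
          · norm_num
          · nlinarith [Nat.zero_le (s.card * β a)]

lemma approx_prod (N : ℕ) (β : Fin N → ℕ) (n : ℕ) (hn : n = ∑ i, β i) (b : Fin N → ℕ → ℂ)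
    (hb : ∀ i k, ‖b i k‖ ≤ 2 ^ k)
    (hba : ∀ i (m : ℕ) (θ : ℝ), |θ| ≤ 1 / 4 →
      ‖∑ k ∈ Finset.range m, b i k * (Complex.exp (Complex.I * θ) - 1) ^ k
        - (Complex.I * θ) ^ β i‖ ≤ 2 * 2 ^ m * |θ| ^ m)
    (θ : Fin N → ℝ) (T : ℝ) (hT : 0 ≤ T) (hθ : ∀ i, |θ i| ≤ T) :
    ‖∏ i, ∑ k ∈ Finset.range (β i + n), b i k * (Complex.exp (Complex.I * θ i) - 1) ^ k
      - ∏ i, (Complex.I * θ i) ^ β i‖ ≤ 4 ^ (N + 1) * 4 ^ ((N + 3) * n) * T ^ (2 * n) := by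
  have hsum : ∑ i, (β i + n) = (N + 1) * n := by
    rw [Finset.sum_add_distrib, ← hn]; simp; ring
  have hψ : ∀ i, ‖(Complex.I * (θ i : ℂ)) ^ β i‖ ≤ T ^ β i := by
    intro i
    rw [norm_pow, norm_mul, Complex.norm_I, one_mul, Complex.norm_real, Real.norm_eq_abs]
    exact pow_le_pow_left₀ (abs_nonneg _) (hθ i) _
  rcases le_or_gt T (1 / 4) with h | h
  · have ht := telescoping Finset.univ
      (fun i => ∑ k ∈ Finset.range (β i + n), b i k * (Complex.exp (Complex.I * θ i) - 1) ^ k)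
      (fun i => (Complex.I * (θ i : ℂ)) ^ β i) (fun i => 2 * 2 ^ (β i + n)) β n T hT (by linarith)
      (fun i => by positivity) hψ (by
        intro i
        refine (hba i _ _ ((hθ i).trans h)).trans ?_
        have := pow_le_pow_left₀ (abs_nonneg _) (hθ i) (β i + n)
        gcongr)
    refine ht.trans ?_
    rw [← hn, ← two_mul]
    gcongr
    have h1 : ∏ i, (1 + 2 * (2 : ℝ) ^ (β i + n)) ≤ ∏ i, 4 * (4 : ℝ) ^ (β i + n) := by
      refine Finset.prod_le_prod (fun i _ => by positivity) (fun i _ => ?_)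
      have h1 : (1 : ℝ) ≤ 2 ^ (β i + n) := one_le_pow₀ (by norm_num)
      have h2 : (2 : ℝ) ^ (β i + n) ≤ 4 ^ (β i + n) := by gcongr; norm_num
      linarith
    rw [Finset.prod_mul_distrib, Finset.prod_pow_eq_pow_sum, hsum] at h1
    simp only [Finset.prod_const, Finset.card_univ, Fintype.card_fin] at h1
    have h2 : (4 : ℝ) ^ N * 4 ^ ((N + 1) * n) ≤ 4 ^ (N + 1) * 4 ^ ((N + 3) * n) := by
      gcongr <;> norm_num
    linarith
  · have h4 : (1 : ℝ) ≤ 4 * T := by linarith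
    have hφ : ‖∏ i, ∑ k ∈ Finset.range (β i + n), b i k * (Complex.exp (Complex.I * θ i) - 1) ^ k‖
        ≤ 4 ^ ((N + 1) * n) := by
      rw [norm_prod, ← hsum, ← Finset.prod_pow_eq_pow_sum]
      refine Finset.prod_le_prod (fun _ _ => norm_nonneg _) (fun i _ => ?_)
      have hu : ‖Complex.exp (Complex.I * θ i) - 1‖ ≤ 2 := by
        refine (norm_sub_le _ _).trans ?_
        rw [mul_comm, Complex.norm_exp_ofReal_mul_I]
        norm_num
      refine (norm_sum_le _ _).trans ?_
      have : ∀ m : ℕ, ∑ k ∈ Finset.range m,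
          ‖b i k * (Complex.exp (Complex.I * θ i) - 1) ^ k‖ ≤ 4 ^ m - 1 := by
        intro m
        induction m with
        | zero => simp
        | succ m ih =>
          rw [Finset.sum_range_succ]
          have : ‖b i m * (Complex.exp (Complex.I * θ i) - 1) ^ m‖ ≤ 2 ^ m * 2 ^ m := by
            rw [norm_mul, norm_pow]
            gcongr
            exact hb i m
          rw [← mul_pow] at this
          norm_num at this
          have h0 : (0 : ℝ) ≤ 4 ^ m := by positivity
          rw [norm_mul, norm_pow] at *
          rw [pow_succ]
          linarith
      linarith [this (β i + n)]
    have hψ2 : ‖∏ i, (Complex.I * (θ i : ℂ)) ^ β i‖ ≤ (4 * T) ^ (2 * n) := by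
      rw [norm_prod]
      calc _ ≤ ∏ i, T ^ β i := Finset.prod_le_prod (fun _ _ => norm_nonneg _) (fun i _ => hψ i)
        _ = T ^ n := by rw [Finset.prod_pow_eq_pow_sum, hn]
        _ ≤ (4 * T) ^ n := by gcongr; linarith
        _ ≤ _ := pow_le_pow_right₀ h4 (by omega)
    have h5 : (1 : ℝ) ≤ (4 * T) ^ (2 * n) := one_le_pow₀ h4
    have h6 : (1 : ℝ) ≤ 4 ^ ((N + 1) * n) := one_le_pow₀ (by norm_num)
    have h7 : (4 : ℝ) ≤ 4 ^ (N + 1) := by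
      calc (4 : ℝ) = 4 ^ 1 := by norm_num
        _ ≤ _ := pow_le_pow_right₀ (by norm_num) (by omega)
    calc _ ≤ (4 : ℝ) ^ ((N + 1) * n) + (4 * T) ^ (2 * n) := (norm_sub_le _ _).trans (add_le_add hφ hψ2)
      _ ≤ 4 ^ ((N + 1) * n) * (4 * T) ^ (2 * n) + 4 ^ ((N + 1) * n) * (4 * T) ^ (2 * n) := by
        apply add_le_add
        · exact le_mul_of_one_le_right (by positivity) h5
        · exact le_mul_of_one_le_left (by positivity) h6
      _ = 2 * (4 ^ ((N + 1) * n) * (4 * T) ^ (2 * n)) := by ring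
      _ ≤ 4 ^ (N + 1) * (4 ^ ((N + 1) * n) * (4 * T) ^ (2 * n)) := by
        gcongr; linarith
      _ = _ := by
        rw [mul_pow, show (N + 3) * n = (N + 1) * n + 2 * n by ring, pow_add 4 ((N + 1) * n)]
        ring

lemma gauss_pt (c r : ℝ) (hc : 0 < c) (n : ℕ) :
    (2 * Real.pi * r) ^ (2 * n) * Real.exp (-c * (2 * Real.pi * r) ^ 2)
      ≤ 2 ^ n * n.factorial / c ^ n * Real.exp (-(2 * Real.pi ^ 2 * c) * r ^ 2) := by
  have h := Real.pow_div_factorial_le_exp (x := 2 * Real.pi ^ 2 * c * r ^ 2) (by positivity) n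
  have hf : (0 : ℝ) < n.factorial := by exact_mod_cast n.factorial_pos
  rw [div_le_iff₀ hf] at h
  have e1 : (2 * Real.pi * r) ^ (2 * n) = 2 ^ n / c ^ n * (2 * Real.pi ^ 2 * c * r ^ 2) ^ n := by
    rw [pow_mul, ← div_pow, ← mul_pow]
    congr 1
    field_simp
  have e2 : Real.exp (-(2 * Real.pi ^ 2 * c) * r ^ 2)
      = Real.exp (2 * Real.pi ^ 2 * c * r ^ 2) * Real.exp (-c * (2 * Real.pi * r) ^ 2) := by
    rw [← Real.exp_add]; congr 1; ring
  rw [e1, e2]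
  calc _ ≤ 2 ^ n / c ^ n * (Real.exp (2 * Real.pi ^ 2 * c * r ^ 2) * n.factorial)
        * Real.exp (-c * (2 * Real.pi * r) ^ 2) := by gcongr
    _ = _ := by ring

lemma gauss_integrable {N : ℕ} (a : ℝ) (ha : 0 < a) :
    Integrable (fun ζ : EuclideanSpace ℝ (Fin N) => Real.exp (-a * ‖ζ‖ ^ 2)) := by
  by_contra hcon
  have h1 := GaussianFourier.integral_rexp_neg_mul_sq_norm (V := EuclideanSpace ℝ (Fin N)) ha
  rw [integral_undef hcon] at h1
  have : 0 < (Real.pi / a) ^ (Module.finrank ℝ (EuclideanSpace ℝ (Fin N)) / 2 : ℝ) := by positivity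
  linarith

lemma fourier_moment {N : ℕ} (F : EuclideanSpace ℝ (Fin N) → ℂ) (C₂ c₂ : ℝ) (hC : 0 < C₂)
    (hc : 0 < c₂) (hF : ∀ ζ, ‖F ζ‖ ≤ C₂ * Real.exp (-c₂ * (2 * Real.pi * ‖ζ‖) ^ 2))
    (n : ℕ) (G : EuclideanSpace ℝ (Fin N) → ℂ) (D : ℝ) (hD : 0 ≤ D)
    (hG : ∀ ζ, ‖G ζ‖ ≤ D * (2 * Real.pi * ‖ζ‖) ^ (2 * n) * ‖F ζ‖) :
    ‖∫ ζ, G ζ‖ ≤ D * (C₂ * (2 ^ n * n.factorial / c₂ ^ n) * (1 / c₂) ^ ((N : ℝ) / 2)) := by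
  have ha : 0 < 2 * Real.pi ^ 2 * c₂ := by positivity
  have hpt : ∀ ζ, ‖G ζ‖ ≤ D * (C₂ * (2 ^ n * n.factorial / c₂ ^ n))
      * Real.exp (-(2 * Real.pi ^ 2 * c₂) * ‖ζ‖ ^ 2) := by
    intro ζ
    calc ‖G ζ‖ ≤ D * (2 * Real.pi * ‖ζ‖) ^ (2 * n) * (C₂ * Real.exp (-c₂ * (2 * Real.pi * ‖ζ‖) ^ 2)) := by
          refine (hG ζ).trans ?_
          gcongr
          exact hF ζ
      _ = D * C₂ * ((2 * Real.pi * ‖ζ‖) ^ (2 * n) * Real.exp (-c₂ * (2 * Real.pi * ‖ζ‖) ^ 2)) := by ring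
      _ ≤ D * C₂ * (2 ^ n * n.factorial / c₂ ^ n * Real.exp (-(2 * Real.pi ^ 2 * c₂) * ‖ζ‖ ^ 2)) := by
          exact mul_le_mul_of_nonneg_left (gauss_pt _ _ hc _) (by positivity)
      _ = _ := by ring
  refine (norm_integral_le_of_norm_le ((gauss_integrable _ ha).const_mul _)
    (Filter.Eventually.of_forall hpt)).trans ?_
  rw [integral_const_mul, GaussianFourier.integral_rexp_neg_mul_sq_norm ha, finrank_euclideanSpace_fin,
    mul_assoc]
  have : (Real.pi / (2 * Real.pi ^ 2 * c₂)) ≤ 1 / c₂ := by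
    rw [div_le_div_iff₀ (by positivity) hc]
    have hpi := Real.pi_gt_three
    have : Real.pi ≤ 2 * Real.pi ^ 2 := by nlinarith
    nlinarith
  gcongr

lemma deriv_interp (N : ℕ) (c₁ c₂ C₁ C₂ : ℝ) (hc₁ : 0 < c₁) (hc₂ : 0 < c₂) (hC₁ : 0 < C₁)
    (hC₂ : 0 < C₂) (f : SchwartzMap (EuclideanSpace ℝ (Fin N)) ℂ)
    (hf : ∀ x, ‖f x‖ ≤ C₁ * Real.exp (-c₁ * ‖x‖ ^ 2))
    (hF : ∀ ζ, ‖FourierTransform.fourier f ζ‖ ≤ C₂ * Real.exp (-c₂ * (2 * Real.pi * ‖ζ‖) ^ 2))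
    (β : Fin N → ℕ) (n : ℕ) (hn : n = ∑ i, β i) (x : EuclideanSpace ℝ (Fin N)) (h : ℝ) (hh : 0 < h) :
    h ^ n * ‖mderiv β (fun y => f y) x‖ ≤ 4 ^ (N + 1) * 4 ^ ((N + 3) * n) *
      (C₁ * Real.exp (-c₁ * ‖x‖ ^ 2) + h ^ (2 * n) *
        (C₂ * (2 ^ n * n.factorial / c₂ ^ n) * (1 / c₂) ^ ((N : ℝ) / 2))) := by
  obtain ⟨g, hg, hgF⟩ := mderiv_fourier β f
  rw [hg]
  choose b hb hba using fun i => approx_one (β i)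
  set σ : Fin N → ℝ := fun i => if 0 ≤ x i then 1 else -1 with hσ
  have hσa : ∀ i, |σ i| = 1 := by intro i; simp only [hσ]; split_ifs <;> simp
  have hσx : ∀ i, σ i * x i = |x i| := by
    intro i; simp only [hσ]; split_ifs with h0
    · rw [abs_of_nonneg h0, one_mul]
    · rw [abs_of_neg (not_le.1 h0)]; ring
  have hσσ : ∀ i, σ i * σ i = 1 := by intro i; simp only [hσ]; split_ifs <;> simp
  set Y : Set (EuclideanSpace ℝ (Fin N)) := {y | ∀ i, |x i| ≤ σ i * y i} with hY
  have hxY : x ∈ Y := fun i => (hσx i).ge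
  set M := C₁ * Real.exp (-c₁ * ‖x‖ ^ 2) with hM
  have hM0 : 0 < M := by positivity
  have hYM : ∀ y ∈ Y, ‖f y‖ ≤ M := by
    intro y hy
    refine (hf y).trans ?_
    have : ‖x‖ ^ 2 ≤ ‖y‖ ^ 2 := by
      rw [EuclideanSpace.real_norm_sq_eq, EuclideanSpace.real_norm_sq_eq]
      refine Finset.sum_le_sum fun i _ => ?_
      have h1 := hy i
      have h2 : |σ i * y i| = |y i| := by rw [abs_mul, hσa, one_mul]
      exact sq_le_sq.2 (h1.trans ((le_abs_self _).trans h2.le))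
    have h3 := mul_le_mul_of_nonneg_left this hc₁.le
    rw [hM]
    gcongr C₁ * Real.exp ?_
    linarith
  set v : Fin N → EuclideanSpace ℝ (Fin N) := fun i => EuclideanSpace.single i (h * σ i) with hv
  have hvY : ∀ i, ∀ y ∈ Y, y + v i ∈ Y := by
    intro i y hy j
    have h1 := hy j
    have h2 : 0 ≤ σ j * (v i) j := by
      simp only [hv, PiLp.single_apply]
      split_ifs with hij
      · subst hij
        nlinarith [hσσ j]
      · simp
    calc |x j| ≤ σ j * y j + σ j * (v i) j := by linarith
      _ = _ := by rw [PiLp.add_apply]; ring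
  have hvin : ∀ i (ζ : EuclideanSpace ℝ (Fin N)), inner ℝ ζ (v i) = h * σ i * ζ i := by
    intro i ζ
    simp only [hv]
    rw [EuclideanSpace.inner_single_right]; simp
  set F : EuclideanSpace ℝ (Fin N) → ℂ := fun ζ => FourierTransform.fourier f ζ with hFd
  have hFint : Integrable F := (FourierTransform.fourier f).integrable
  set Φ : EuclideanSpace ℝ (Fin N) → ℂ := fun ζ => ∏ i, ∑ k ∈ Finset.range (β i + n),
    b i k * (Complex.exp (Complex.I * ↑(2 * Real.pi * inner ℝ ζ (v i))) - 1) ^ k with hΦ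
  set Ψ : EuclideanSpace ℝ (Fin N) → ℂ := fun ζ => ∏ i,
    (Complex.I * ↑(2 * Real.pi * inner ℝ ζ (v i))) ^ β i with hΨ
  have hact : ActsBdd Y Φ (∏ i, ∑ k ∈ Finset.range (β i + n), 2 ^ k * (1 + 1 * 1) ^ k) := by
    refine ActsBdd.prod _ fun i => ActsBdd.sum _ fun k => ActsBdd.smul _ (hb i k) (ActsBdd.pow ?_ k)
    have := (ActsBdd.exp (v i) (hvY i)).add (ActsBdd.smul (-1) (C := 1) (by simp) (ActsBdd.one Y))
    simpa [sub_eq_add_neg] using this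
  have hB : ∏ i, ∑ k ∈ Finset.range (β i + n), (2 : ℝ) ^ k * (1 + 1 * 1) ^ k
      ≤ 4 ^ (N + 1) * 4 ^ ((N + 3) * n) := by
    have hs : ∀ m : ℕ, ∑ k ∈ Finset.range m, (2 : ℝ) ^ k * (1 + 1 * 1) ^ k ≤ 4 ^ m - 1 := by
      intro m
      induction m with
      | zero => simp
      | succ m ih =>
        rw [Finset.sum_range_succ, ← mul_pow, pow_succ]
        norm_num at ih ⊢
        have h0 : (0 : ℝ) ≤ 4 ^ m := by positivity
        linarith
    calc _ ≤ ∏ i, (4 : ℝ) ^ (β i + n) := by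
          refine Finset.prod_le_prod (fun i _ => by positivity) fun i _ => ?_
          linarith [hs (β i + n)]
      _ = 4 ^ ((N + 1) * n) := by
          rw [Finset.prod_pow_eq_pow_sum]
          congr 1
          rw [Finset.sum_add_distrib, ← hn]; simp; ring
      _ ≤ 4 ^ ((N + 3) * n) := by gcongr <;> first | norm_num | omega
      _ ≤ _ := le_mul_of_one_le_left (by positivity) (one_le_pow₀ (by norm_num))
  obtain ⟨hΦint, hΦb⟩ := hact F hFint M (by
    intro y hy
    rw [← schwartz_inversion]
    exact hYM y hy)
  have hΨg : ∀ ζ, Ψ ζ * F ζ = (∏ i, ((h * σ i : ℝ) : ℂ) ^ β i) * FourierTransform.fourier g ζ := by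
    intro ζ
    rw [hgF, ← mul_assoc, ← Finset.prod_mul_distrib]
    simp only [hΨ, hFd]
    congr 1
    refine Finset.prod_congr rfl fun i _ => ?_
    rw [← mul_pow, hvin]
    congr 1
    push_cast
    ring
  have hΨint : Integrable (fun ζ => Ψ ζ * F ζ) := by
    simp only [hΨg]
    exact (FourierTransform.fourier g).integrable.const_mul _
  have hcn : ‖∏ i, ((h * σ i : ℝ) : ℂ) ^ β i‖ = h ^ n := by
    rw [norm_prod, hn, ← Finset.prod_pow_eq_pow_sum]
    refine Finset.prod_congr rfl fun i _ => ?_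
    rw [norm_pow, Complex.norm_real, Real.norm_eq_abs, abs_mul, hσa, abs_of_pos hh, mul_one]
  have hmain : h ^ n * ‖g x‖
      = ‖∫ ζ, Complex.exp (↑(2 * Real.pi * inner ℝ ζ x) * Complex.I) * (Ψ ζ * F ζ)‖ := by
    rw [schwartz_inversion g x, ← hcn, ← norm_mul, ← integral_const_mul]
    congr 2
    ext ζ
    rw [hΨg]
    ring
  have hsplit : (∫ ζ, Complex.exp (↑(2 * Real.pi * inner ℝ ζ x) * Complex.I) * (Ψ ζ * F ζ))
      = (∫ ζ, Complex.exp (↑(2 * Real.pi * inner ℝ ζ x) * Complex.I) * (Φ ζ * F ζ))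
        - ∫ ζ, Complex.exp (↑(2 * Real.pi * inner ℝ ζ x) * Complex.I) * ((Φ ζ - Ψ ζ) * F ζ) := by
    rw [← integral_sub (integrable_exp_mul x hΦint)]
    · congr 1
      ext ζ
      ring
    · simp only [sub_mul]
      exact integrable_exp_mul x (hΦint.sub hΨint)
  have herr : ‖∫ ζ, Complex.exp (↑(2 * Real.pi * inner ℝ ζ x) * Complex.I) * ((Φ ζ - Ψ ζ) * F ζ)‖
      ≤ (4 ^ (N + 1) * 4 ^ ((N + 3) * n) * h ^ (2 * n)) *
        (C₂ * (2 ^ n * n.factorial / c₂ ^ n) * (1 / c₂) ^ ((N : ℝ) / 2)) := by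
    refine fourier_moment F C₂ c₂ hC₂ hc₂ hF n _ _ (by positivity) ?_
    intro ζ
    rw [norm_mul, norm_mul, Complex.norm_exp_ofReal_mul_I, one_mul]
    gcongr
    have := approx_prod N β n hn b hb hba (fun i => 2 * Real.pi * inner ℝ ζ (v i))
      (h * (2 * Real.pi * ‖ζ‖)) (by positivity) (by
        intro i
        rw [hvin]
        have h1 : |ζ i| ≤ ‖ζ‖ := by simpa using PiLp.norm_apply_le ζ i
        rw [abs_mul, abs_mul (h * σ i), abs_mul h, hσa, abs_of_pos hh,
          abs_of_pos (show (0 : ℝ) < 2 * Real.pi by positivity)]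
        calc _ = h * (2 * Real.pi * |ζ i|) := by ring
          _ ≤ _ := by gcongr)
    refine this.trans (le_of_eq ?_)
    rw [mul_pow h]; ring
  rw [hmain, hsplit]
  refine (norm_sub_le _ _).trans ?_
  have h1 := hΦb x hxY
  have h2 := mul_le_mul_of_nonneg_right hB hM0.le
  linarith

lemma deriv_bound (N : ℕ) (c₁ c₂ C₁ C₂ : ℝ) (hc₁ : 0 < c₁) (hc₂ : 0 < c₂) (hC₁ : 0 < C₁)
    (hC₂ : 0 < C₂) (f : SchwartzMap (EuclideanSpace ℝ (Fin N)) ℂ)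
    (hf : ∀ x, ‖f x‖ ≤ C₁ * Real.exp (-c₁ * ‖x‖ ^ 2))
    (hF : ∀ ζ, ‖FourierTransform.fourier f ζ‖ ≤ C₂ * Real.exp (-c₂ * (2 * Real.pi * ‖ζ‖) ^ 2))
    (β : Fin N → ℕ) (n : ℕ) (hn : n = ∑ i, β i) (x : EuclideanSpace ℝ (Fin N)) :
    ‖mderiv β (fun y => f y) x‖ ≤ 2 * (4 ^ (N + 1) * 4 ^ ((N + 3) * n)) *
      Real.sqrt (C₁ * Real.exp (-c₁ * ‖x‖ ^ 2) *
        (C₂ * (2 ^ n * n.factorial / c₂ ^ n) * (1 / c₂) ^ ((N : ℝ) / 2))) := by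
  have hint := deriv_interp N c₁ c₂ C₁ C₂ hc₁ hc₂ hC₁ hC₂ f hf hF β n hn x
  set M := C₁ * Real.exp (-c₁ * ‖x‖ ^ 2) with hM
  have hM0 : 0 < M := by positivity
  set R := C₂ * (2 ^ n * n.factorial / c₂ ^ n) * (1 / c₂) ^ ((N : ℝ) / 2) with hR
  have hR0 : 0 < R := by
    have hf : (0 : ℝ) < n.factorial := by exact_mod_cast n.factorial_pos
    positivity
  set D : ℝ := 4 ^ (N + 1) * 4 ^ ((N + 3) * n) with hD
  have hD1 : 1 ≤ D := one_le_mul_of_one_le_of_one_le (one_le_pow₀ (by norm_num)) (one_le_pow₀ (by norm_num))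
  rcases Nat.eq_zero_or_pos n with h0 | hpos
  · obtain ⟨g, hg, hgF⟩ := mderiv_fourier β f
    have hβ : ∀ i, β i = 0 := by
      intro i
      have := Finset.single_le_sum (fun j _ => Nat.zero_le (β j)) (Finset.mem_univ i)
      omega
    have hgf : g x = f x := by
      rw [schwartz_inversion g, schwartz_inversion f]
      congr 1
      ext ζ
      rw [hgF]
      simp [hβ]
    rw [hg]
    simp only [hgf]
    have h1 : ‖f x‖ ≤ M := hf x
    have h2 : ‖f x‖ ≤ R := by
      rw [schwartz_inversion f]
      have := fourier_moment (fun ζ => FourierTransform.fourier f ζ) C₂ c₂ hC₂ hc₂ hF n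
        (fun ζ => Complex.exp (↑(2 * Real.pi * inner ℝ ζ x) * Complex.I)
          * FourierTransform.fourier f ζ) 1 zero_le_one (by
          intro ζ
          rw [norm_mul, Complex.norm_exp_ofReal_mul_I, h0]
          simp)
      rwa [one_mul] at this
    have h3 : ‖f x‖ ≤ Real.sqrt (M * R) := by
      apply Real.le_sqrt_of_sq_le
      rw [sq]
      exact mul_le_mul h1 h2 (norm_nonneg _) hM0.le
    have h4 : (1 : ℝ) ≤ 2 * D := by linarith
    exact h3.trans (le_mul_of_one_le_left (Real.sqrt_nonneg _) h4)
  · set h : ℝ := (Real.sqrt M / Real.sqrt R) ^ ((n : ℝ)⁻¹) with hh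
    have hsM : 0 < Real.sqrt M := Real.sqrt_pos.2 hM0
    have hsR : 0 < Real.sqrt R := Real.sqrt_pos.2 hR0
    have hhpos : 0 < h := by positivity
    have hhn : h ^ n = Real.sqrt M / Real.sqrt R :=
      Real.rpow_inv_natCast_pow (by positivity) (by omega)
    have := hint h hhpos
    rw [mul_comm 2 n, pow_mul, hhn] at this
    rw [Real.sqrt_mul hM0.le]
    set a := Real.sqrt M
    set r := Real.sqrt R
    have ea : M = a ^ 2 := (Real.sq_sqrt hM0.le).symm
    have er : R = r ^ 2 := (Real.sq_sqrt hR0.le).symm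
    rw [ea, er] at this
    have e3 : (a / r) ^ 2 * r ^ 2 = a ^ 2 := by field_simp
    rw [e3] at this
    have e4 : D * (a ^ 2 + a ^ 2) = a / r * (2 * D * (a * r)) := by field_simp; ring
    rw [e4] at this
    exact le_of_mul_le_mul_left this (by positivity)

lemma monomial_bound (N : ℕ) (c₁ : ℝ) (hc₁ : 0 < c₁) (α : Fin N → ℕ) (x : EuclideanSpace ℝ (Fin N)) :
    ‖∏ i, (x i : ℂ) ^ α i‖ ≤ Real.sqrt ((∏ i, ((α i).factorial : ℝ)) / c₁ ^ (∑ i, α i)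
      * Real.exp (c₁ * ‖x‖ ^ 2)) := by
  apply Real.le_sqrt_of_sq_le
  rw [norm_prod, ← Finset.prod_pow, EuclideanSpace.real_norm_sq_eq, Finset.mul_sum, Real.exp_sum,
    ← Finset.prod_pow_eq_pow_sum, ← Finset.prod_div_distrib, ← Finset.prod_mul_distrib]
  refine Finset.prod_le_prod (fun i _ => by positivity) fun i _ => ?_
  have h := Real.pow_div_factorial_le_exp (x := c₁ * (x i) ^ 2) (by positivity) (α i)
  have hf : (0 : ℝ) < (α i).factorial := by exact_mod_cast (α i).factorial_pos
  rw [div_le_iff₀ hf, mul_pow] at h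
  rw [norm_pow, Complex.norm_real, Real.norm_eq_abs, ← pow_mul, mul_comm (α i) 2, pow_mul, sq_abs,
    div_mul_eq_mul_div, le_div_iff₀ (by positivity)]
  linarith

/-- There exists `C > 1` depending only on `N` such that for all
`0 < c₁ < 1`, `0 < c₂ < 1`, `C₁, C₂ > 0` and every Schwartz function `f` with
`|f(x)| ≤ C₁ e^{-c₁|x|²}` and `|f̂(ξ)| ≤ C₂ e^{-c₂|ξ|²}`, one has for all `α, β`:
`|x^α ∂_x^β f(x)| ≤ C^{1+|α|+|β|} [C₁ c₁^{-(|α|+N/4)} C₂ c₂^{-(|β|+⌊N/2⌋+1+N/4)} α! β!]^{1/2}`. -/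
theorem statement_13 (N : ℕ) (hN : 1 ≤ N) :
    ∃ C > (1 : ℝ),
      ∀ c₁ c₂ C₁ C₂ : ℝ, 0 < c₁ → c₁ < 1 → 0 < c₂ → c₂ < 1 → 0 < C₁ → 0 < C₂ →
        ∀ f : SchwartzMap (EuclideanSpace ℝ (Fin N)) ℂ,
          (∀ x, ‖f x‖ ≤ C₁ * Real.exp (-c₁ * ‖x‖ ^ 2)) →
          (∀ ξ : EuclideanSpace ℝ (Fin N),
            ‖∫ x : EuclideanSpace ℝ (Fin N),
                Complex.exp (-(Complex.I * ∑ i, (x i : ℂ) * (ξ i : ℂ))) * f x‖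
              ≤ C₂ * Real.exp (-c₂ * ‖ξ‖ ^ 2)) →
          ∀ α β : Fin N → ℕ, ∀ x : EuclideanSpace ℝ (Fin N),
            ‖(∏ i, (x i : ℂ) ^ α i) * mderiv β (fun y => f y) x‖
              ≤ C ^ (1 + (∑ i, α i) + ∑ i, β i) *
                  Real.sqrt (C₁ / c₁ ^ (((∑ i, α i : ℕ) : ℝ) + N / 4)
                    * (C₂ / c₂ ^ (((∑ i, β i : ℕ) : ℝ) + ((N / 2 : ℕ) : ℝ) + 1 + (N : ℝ) / 4))
                    * (∏ i, Nat.factorial (α i)) * (∏ i, Nat.factorial (β i))) := by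
  refine ⟨4 ^ (2 * N + 4), one_lt_pow₀ (by norm_num) (by omega), ?_⟩
  intro c₁ c₂ C₁ C₂ hc₁ hc₁1 hc₂ hc₂1 hC₁ hC₂ f hf hfF α β x
  have hF := fourier_bound f C₂ c₂ hfF
  have hd := deriv_bound N c₁ c₂ C₁ C₂ hc₁ hc₂ hC₁ hC₂ f hf hF β _ rfl x
  have hm := monomial_bound N c₁ hc₁ α x
  have hfac := factorial_sum_le Finset.univ β
  rw [Finset.card_univ, Fintype.card_fin] at hfac
  push_cast
  rw [← Nat.cast_sum, ← Nat.cast_sum]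
  set n := ∑ i, β i
  set A := ∑ i, α i
  set af := ∏ i, ((α i).factorial : ℝ) with ha
  set bf := ∏ i, ((β i).factorial : ℝ) with hb
  have ha0 : 0 < af := Finset.prod_pos fun i _ => by exact_mod_cast (α i).factorial_pos
  have hb0 : 0 < bf := Finset.prod_pos fun i _ => by exact_mod_cast (β i).factorial_pos
  set e1 : ℝ := c₁ ^ ((A : ℝ) + (N : ℝ) / 4) with he1
  set e2 : ℝ := c₂ ^ ((n : ℝ) + ((N / 2 : ℕ) : ℝ) + 1 + (N : ℝ) / 4) with he2
  have he10 : 0 < e1 := Real.rpow_pos_of_pos hc₁ _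
  have he20 : 0 < e2 := Real.rpow_pos_of_pos hc₂ _
  have h1 : e1 ≤ c₁ ^ A := by
    rw [← Real.rpow_natCast c₁ A]
    apply Real.rpow_le_rpow_of_exponent_ge hc₁ hc₁1.le
    have : (0 : ℝ) ≤ (N : ℝ) / 4 := by positivity
    linarith
  have h2 : e2 ≤ c₂ ^ n * c₂ ^ ((N : ℝ) / 2) := by
    rw [← Real.rpow_natCast c₂ n, ← Real.rpow_add hc₂]
    apply Real.rpow_le_rpow_of_exponent_ge hc₂ hc₂1.le
    have h3 : (0 : ℝ) ≤ (N : ℝ) / 4 := by positivity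
    have h4 : N ≤ 2 * (N / 2) + 2 := by omega
    have h5 : (N : ℝ) ≤ 2 * ((N / 2 : ℕ) : ℝ) + 2 := by exact_mod_cast h4
    linarith
  set E := Real.exp (c₁ * ‖x‖ ^ 2) with hE
  have hE2 : E * Real.exp (-c₁ * ‖x‖ ^ 2) = 1 := by
    rw [hE, ← Real.exp_add, ← Real.exp_zero]; congr 1; ring
  set P := C₁ / e1 * (C₂ / e2) * af * bf with hP
  have hP0 : 0 < P := by positivity
  have hin : af / c₁ ^ A * E * (C₁ * Real.exp (-c₁ * ‖x‖ ^ 2) *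
        (C₂ * (2 ^ n * n.factorial / c₂ ^ n) * (1 / c₂) ^ ((N : ℝ) / 2)))
      ≤ (2 ^ ((N + 1) * n)) ^ 2 * P := by
    have hq : (1 / c₂) ^ ((N : ℝ) / 2) = 1 / c₂ ^ ((N : ℝ) / 2) := by
      rw [Real.div_rpow zero_le_one hc₂.le, Real.one_rpow]
    rw [hq]
    have hr : 0 < c₂ ^ ((N : ℝ) / 2) := Real.rpow_pos_of_pos hc₂ _
    calc _ = (E * Real.exp (-c₁ * ‖x‖ ^ 2)) * (C₁ / c₁ ^ A * (C₂ / (c₂ ^ n * c₂ ^ ((N : ℝ) / 2))) * af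
          * (2 ^ n * n.factorial)) := by field_simp
      _ = C₁ / c₁ ^ A * (C₂ / (c₂ ^ n * c₂ ^ ((N : ℝ) / 2))) * af * (2 ^ n * n.factorial) := by
          rw [hE2, one_mul]
      _ ≤ C₁ / e1 * (C₂ / e2) * af * (2 ^ n * (2 ^ (N * n) * bf)) := by
          gcongr
      _ = 2 ^ ((N + 1) * n) * P := by
          rw [hP, show (N + 1) * n = n + N * n by ring, pow_add]; ring
      _ ≤ _ := by
          gcongr
          rw [sq]
          exact le_mul_of_one_le_left (by positivity) (one_le_pow₀ (by norm_num))
  rw [norm_mul]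
  calc _ ≤ Real.sqrt (af / c₁ ^ A * E) * (2 * (4 ^ (N + 1) * 4 ^ ((N + 3) * n)) *
      Real.sqrt (C₁ * Real.exp (-c₁ * ‖x‖ ^ 2) *
        (C₂ * (2 ^ n * n.factorial / c₂ ^ n) * (1 / c₂) ^ ((N : ℝ) / 2)))) :=
        mul_le_mul hm hd (norm_nonneg _) (Real.sqrt_nonneg _)
    _ = 2 * (4 ^ (N + 1) * 4 ^ ((N + 3) * n)) * Real.sqrt (af / c₁ ^ A * E *
      (C₁ * Real.exp (-c₁ * ‖x‖ ^ 2) *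
        (C₂ * (2 ^ n * n.factorial / c₂ ^ n) * (1 / c₂) ^ ((N : ℝ) / 2)))) := by
        rw [Real.sqrt_mul (by positivity : 0 ≤ af / c₁ ^ A * E)]; ring
    _ ≤ 2 * (4 ^ (N + 1) * 4 ^ ((N + 3) * n)) * (2 ^ ((N + 1) * n) * Real.sqrt P) := by
        have := Real.sqrt_le_sqrt hin
        rw [Real.sqrt_mul (show (0 : ℝ) ≤ (2 ^ ((N + 1) * n)) ^ 2 by positivity), Real.sqrt_sq (by positivity)] at this
        exact mul_le_mul_of_nonneg_left this (by positivity)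
    _ = (2 * (4 ^ (N + 1) * 4 ^ ((N + 3) * n)) * 2 ^ ((N + 1) * n)) * Real.sqrt P := by ring
    _ ≤ (4 ^ (2 * N + 4)) ^ (1 + A + n) * Real.sqrt P := by
        refine mul_le_mul_of_nonneg_right ?_ (Real.sqrt_nonneg _)
        calc _ ≤ (4 : ℝ) * (4 ^ (N + 1) * 4 ^ ((N + 3) * n)) * 4 ^ ((N + 1) * n) := by
              gcongr <;> norm_num
          _ = 4 ^ (N + 2 + (2 * N + 4) * n) := by
              rw [← pow_add, ← pow_succ', ← pow_add]; congr 1; ring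
          _ ≤ _ := by
              rw [← pow_mul]
              apply pow_le_pow_right₀ (by norm_num)
              nlinarith [Nat.zero_le ((2 * N + 4) * A)]
end

section
/- Let N ≥ 1, let 0 < c₁ < 1, 0 < c₂ < 1, C₁ > 0, C₂ > 0, and let f ∈ 𝒮(ℝ^N) be a Schwartz function satisfying |f(x)| ≤ C₁ e^{−c₁|x|²} for all x ∈ ℝ^N and |f̂(ξ)| ≤ C₂ e^{−c₂|ξ|²} for all ξ ∈ ℝ^N. Then for all multi-indices α, β ∈ ℕ^N: ‖x^α ∂_x^β f(x)‖²_{L²(ℝ^N)} ≤ 2^{3|α|+3|β|−N/2} · C₁ c₁^{−(|α|+N/4)} · C₂ c₂^{−(|β|+N/4)} · α! · β!. -/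
open MeasureTheory
open scoped ENNReal

open scoped FourierTransform LineDeriv SchwartzMap

abbrev EN (N : ℕ) := EuclideanSpace ℝ (Fin N)

noncomputable def pS {N : ℕ} (i : Fin N) (g : 𝓢(EN N, ℂ)) : 𝓢(EN N, ℂ) :=
  ∂_{(EuclideanSpace.single i (1:ℝ) : EN N)} g

lemma pS_coe {N : ℕ} (i : Fin N) (g : 𝓢(EN N, ℂ)) : ⇑(pS i g) = pderivE i (fun y => g y) := by
  ext x
  simp only [pS, pderivE, SchwartzMap.lineDerivOp_apply_eq_fderiv]

lemma pS_iter_coe {N : ℕ} (i : Fin N) (n : ℕ) (g : 𝓢(EN N, ℂ)) :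
    ⇑((pS i)^[n] g) = (pderivE i)^[n] (fun y => g y) := by
  induction n generalizing g with
  | zero => rfl
  | succ n ih =>
    simp only [Function.iterate_succ, Function.comp]
    rw [ih, pS_coe]

noncomputable def mS {N : ℕ} (β : Fin N → ℕ) (g : 𝓢(EN N, ℂ)) : 𝓢(EN N, ℂ) :=
  (List.ofFn fun i : Fin N => (pS i)^[β i]).foldr (· ∘ ·) id g

lemma mS_coe {N : ℕ} (β : Fin N → ℕ) (g : 𝓢(EN N, ℂ)) :
    ⇑(mS β g) = mderiv β (fun y => g y) := by
  unfold mS mderiv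
  simp only [List.ofFn_eq_map]
  generalize List.finRange N = l
  induction l with
  | nil => rfl
  | cons i l ih =>
    simp only [List.map_cons, List.foldr_cons, Function.comp]
    rw [pS_iter_coe, ih]

lemma fourier_pS {N : ℕ} (i : Fin N) (g : 𝓢(EN N, ℂ)) (w : EN N) :
    (𝓕 (pS i g)) w = (2 * Real.pi * Complex.I * (w i : ℂ)) * (𝓕 g) w := by
  unfold pS
  rw [SchwartzMap.fourier_lineDerivOp_eq]
  rw [smul_apply, SchwartzMap.smulLeftCLM_apply_apply (by fun_prop)]
  simp [EuclideanSpace.inner_single_right]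
  ring

lemma fourier_pS_iter {N : ℕ} (i : Fin N) (n : ℕ) (g : 𝓢(EN N, ℂ)) (w : EN N) :
    (𝓕 ((pS i)^[n] g)) w = (2 * Real.pi * Complex.I * (w i : ℂ)) ^ n * (𝓕 g) w := by
  induction n with
  | zero => simp
  | succ n ih =>
    rw [Function.iterate_succ_apply', fourier_pS, ih]; ring

lemma fourier_mS {N : ℕ} (β : Fin N → ℕ) (g : 𝓢(EN N, ℂ)) (w : EN N) :
    (𝓕 (mS β g)) w = (∏ i, (2 * Real.pi * Complex.I * (w i : ℂ)) ^ β i) * (𝓕 g) w := by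
  rw [← List.prod_ofFn]
  unfold mS
  simp only [List.ofFn_eq_map]
  generalize List.finRange N = l
  induction l with
  | nil => simp
  | cons i l ih =>
    simp only [List.map_cons, List.foldr_cons, Function.comp, List.prod_cons]
    rw [fourier_pS_iter, ih, ← mul_assoc]

lemma mS_zero {N : ℕ} (g : 𝓢(EN N, ℂ)) : mS (0 : Fin N → ℕ) g = g := by
  have h : 𝓕 (mS (0 : Fin N → ℕ) g) = 𝓕 g := by
    ext w; rw [fourier_mS]; simp
  rw [← FourierTransform.fourierInv_fourier_eq (F := 𝓢(EN N, ℂ)) (mS 0 g), h,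
    FourierTransform.fourierInv_fourier_eq]

lemma mS_update {N : ℕ} (β : Fin N → ℕ) (i : Fin N) (g : 𝓢(EN N, ℂ)) :
    mS (Function.update β i (β i + 1)) g = pS i (mS β g) := by
  have h : 𝓕 (mS (Function.update β i (β i + 1)) g) = 𝓕 (pS i (mS β g)) := by
    ext w
    rw [fourier_mS, fourier_pS, fourier_mS, ← mul_assoc]
    congr 1
    rw [← Finset.mul_prod_erase _ _ (Finset.mem_univ i),
      ← Finset.mul_prod_erase Finset.univ (fun j => (2 * Real.pi * Complex.I * (w j : ℂ)) ^ β j)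
        (Finset.mem_univ i), Function.update_self, pow_succ']
    rw [mul_assoc]
    congr 2
    refine Finset.prod_congr rfl fun j hj => ?_
    rw [Function.update_of_ne (Finset.ne_of_mem_erase hj)]
  rw [← FourierTransform.fourierInv_fourier_eq (F := 𝓢(EN N, ℂ)) (mS _ g), h,
    FourierTransform.fourierInv_fourier_eq]

noncomputable def mon {N : ℕ} (a : Fin N → ℕ) (x : EN N) : ℂ := ∏ i, (x i : ℂ) ^ a i

lemma mon_cont {N : ℕ} (a : Fin N → ℕ) : Continuous (mon a) := by
  unfold mon; fun_prop

lemma norm_mon_le {N : ℕ} (a : Fin N → ℕ) (x : EN N) : ‖mon a x‖ ≤ ‖x‖ ^ (∑ i, a i) := by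
  unfold mon
  rw [norm_prod, ← Finset.prod_pow_eq_pow_sum]
  refine Finset.prod_le_prod (fun _ _ => norm_nonneg _) fun i _ => ?_
  rw [norm_pow, Complex.norm_real]
  gcongr
  exact PiLp.norm_apply_le x i

lemma mon_int {N : ℕ} (a : Fin N → ℕ) (g h : 𝓢(EN N, ℂ)) :
    Integrable (fun x => mon a x * g x * (starRingEnd ℂ) (h x)) := by
  obtain ⟨C, hC⟩ : ∃ C, ∀ x, ‖h x‖ ≤ C := ⟨_, fun x => h.norm_le_seminorm ℝ x⟩
  refine Integrable.mono' ((g.integrable_pow_mul volume (∑ i, a i)).mul_const C) ?_ ?_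
  · have := mon_cont a
    have h1 := g.continuous
    have h2 := h.continuous
    exact Continuous.aestronglyMeasurable (by fun_prop)
  · refine Filter.Eventually.of_forall fun x => ?_
    rw [norm_mul, norm_mul, RCLike.norm_conj]
    gcongr
    · exact norm_mon_le a x
    · exact hC x

lemma mon_deriv {N : ℕ} (a : Fin N → ℕ) (i : Fin N) (x : EN N) :
    HasLineDerivAt ℝ (mon a) ((a i : ℂ) * mon (Function.update a i (a i - 1)) x) x
      (EuclideanSpace.single i 1) := by
  unfold HasLineDerivAt
  have h1 : (fun t : ℝ => mon a (x + t • (EuclideanSpace.single i (1:ℝ) : EN N))) =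
      fun t : ℝ => ((x i + t : ℝ) : ℂ) ^ a i * ∏ j ∈ Finset.univ.erase i, (x j : ℂ) ^ a j := by
    ext t
    unfold mon
    rw [← Finset.mul_prod_erase _ _ (Finset.mem_univ i)]
    congr 1
    · simp
    · refine Finset.prod_congr rfl fun j hj => ?_
      simp [Finset.ne_of_mem_erase hj]
  have h2 : (a i : ℂ) * mon (Function.update a i (a i - 1)) x =
      (a i : ℂ) * ((x i + 0 : ℝ) : ℂ) ^ (a i - 1) * 1
        * ∏ j ∈ Finset.univ.erase i, (x j : ℂ) ^ a j := by
    unfold mon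
    rw [← Finset.mul_prod_erase _ _ (Finset.mem_univ i), Function.update_self, ← mul_assoc]
    congr 1
    · simp
    · refine Finset.prod_congr rfl fun j hj => ?_
      rw [Function.update_of_ne (Finset.ne_of_mem_erase hj)]
  rw [h1, h2]
  refine HasDerivAt.mul_const ?_ _
  have h3 : HasDerivAt (fun t : ℝ => ((x i + t : ℝ) : ℂ)) 1 0 := by
    have := ((hasDerivAt_id (0:ℝ)).const_add (x i)).ofReal_comp
    simpa using this
  exact h3.pow (a i)

lemma pS_deriv {N : ℕ} (i : Fin N) (g : 𝓢(EN N, ℂ)) (x : EN N) :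
    HasLineDerivAt ℝ g (pS i g x) x (EuclideanSpace.single i 1) := by
  have := (g.hasFDerivAt x).hasLineDerivAt (EuclideanSpace.single i 1)
  rwa [pS, SchwartzMap.lineDerivOp_apply_eq_fderiv]

noncomputable def J {N : ℕ} (a : Fin N → ℕ) (g h : 𝓢(EN N, ℂ)) : ℂ :=
  ∫ x, mon a x * g x * (starRingEnd ℂ) (h x)

lemma J_parts {N : ℕ} (a : Fin N → ℕ) (i : Fin N) (g h : 𝓢(EN N, ℂ)) :
    J a (pS i g) h = - ((a i : ℂ) * J (Function.update a i (a i - 1)) g h + J a g (pS i h)) := by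
  have key := integral_bilinear_hasLineDerivAt_right_eq_neg_left_of_integrable (μ := volume)
    (f := fun x => mon a x * (starRingEnd ℂ) (h x))
    (f' := fun x => ((a i : ℂ) * mon (Function.update a i (a i - 1)) x) * (starRingEnd ℂ) (h x)
      + mon a x * (starRingEnd ℂ) (pS i h x))
    (g := g) (g' := pS i g) (v := EuclideanSpace.single i (1:ℝ))
    (B := ContinuousLinearMap.mul ℝ ℂ) ?_ ?_ ?_ ?_ ?_
  · simp only [ContinuousLinearMap.mul_apply'] at key
    unfold J
    rw [← integral_const_mul, ← integral_add ((mon_int _ _ _).const_mul _) (mon_int _ _ _)]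
    refine (integral_congr_ae (Filter.Eventually.of_forall fun x => ?_)).trans
      (key.trans (congrArg _ (integral_congr_ae (Filter.Eventually.of_forall fun x => ?_))))
    · ring
    · ring
  · simp only [ContinuousLinearMap.mul_apply']
    convert! ((mon_int (Function.update a i (a i - 1)) g h).const_mul (a i : ℂ)).add
      (mon_int a g (pS i h)) using 1
    ext x; simp only [Pi.add_apply]; ring
  · simp only [ContinuousLinearMap.mul_apply']
    convert! mon_int a (pS i g) h using 1
    ext x; ring
  · simp only [ContinuousLinearMap.mul_apply']
    convert! mon_int a g h using 1
    ext x; ring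
  · intro x _
    have h1 := mon_deriv a i x
    have h2 := pS_deriv i h x
    unfold HasLineDerivAt at h1 h2 ⊢
    have h4 : HasDerivAt (fun t : ℝ =>
        (starRingEnd ℂ) (h (x + t • (EuclideanSpace.single i (1:ℝ) : EN N))))
        ((starRingEnd ℂ) (pS i h x)) 0 := h2.star
    have h3 := h1.mul h4
    simp only [zero_smul, add_zero] at h3
    exact h3
  · intro x _
    exact pS_deriv i g x

noncomputable def SS (h : ℕ → ℕ → ℝ) (a b B : ℕ) : ℝ :=
  ∑ γ ∈ Finset.range (b + 1), (b.choose γ : ℝ) * (a.descFactorial γ : ℝ) * h (a - γ) (B - γ)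

lemma SS_rec (h : ℕ → ℕ → ℝ) (a b B : ℕ) :
    (a : ℝ) * SS h (a - 1) b B + SS h a b (B + 1) = SS h a (b + 1) (B + 1) := by
  have h1 : SS h a b (B + 1) = ∑ γ ∈ Finset.range (b + 1 + 1),
      (b.choose γ : ℝ) * (a.descFactorial γ : ℝ) * h (a - γ) (B + 1 - γ) := by
    rw [Finset.sum_range_succ]; simp [SS]
  rw [h1, Finset.sum_range_succ']
  unfold SS
  rw [Finset.sum_range_succ' _ (b + 1), Finset.mul_sum, ← add_assoc, ← Finset.sum_add_distrib]
  congr 1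
  · refine Finset.sum_congr rfl fun δ _ => ?_
    rw [Nat.choose_succ_succ]
    have e1 : a - 1 - δ = a - (δ + 1) := by omega
    have e2 : B + 1 - (δ + 1) = B - δ := by omega
    have e3 : a.descFactorial (δ + 1) = a * (a - 1).descFactorial δ := by
      cases a with
      | zero => simp
      | succ a => rw [Nat.succ_descFactorial_succ]; simp
    rw [e1, e2, e3]
    push_cast
    ring
  · simp

lemma SS_nonneg (h : ℕ → ℕ → ℝ) (hh : ∀ a b, 0 ≤ h a b) (a b B : ℕ) : 0 ≤ SS h a b B :=
  Finset.sum_nonneg fun _ _ => mul_nonneg (by positivity) (hh _ _)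

lemma J_bound {N : ℕ} (f : 𝓢(EN N, ℂ)) (h : ℕ → ℕ → ℝ) (K : ℝ)
    (base : ∀ a b : Fin N → ℕ, ‖J a f (mS b f)‖ ≤ K * ∏ i, h (a i) (b i)) :
    ∀ (n : ℕ) (b : Fin N → ℕ), ∑ i, b i = n → ∀ a b' : Fin N → ℕ,
      ‖J a (mS b f) (mS b' f)‖ ≤ K * ∏ i, SS h (a i) (b i) (b i + b' i) := by
  intro n
  induction n with
  | zero =>
    intro b hb a b'
    have : b = 0 := by
      ext i
      exact Finset.sum_eq_zero_iff.mp hb i (Finset.mem_univ i)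
    subst this
    rw [mS_zero]
    refine (base a b').trans (le_of_eq ?_)
    simp [SS]
  | succ n ih =>
    intro b hb a b'
    obtain ⟨i, hi⟩ : ∃ i, 0 < b i := by
      by_contra! hcon
      have : ∑ i, b i = 0 := Finset.sum_eq_zero fun i _ => Nat.le_zero.mp (hcon i)
      omega
    obtain ⟨b0, hb0⟩ : ∃ b0 : Fin N → ℕ, b = Function.update b0 i (b0 i + 1) := by
      refine ⟨Function.update b i (b i - 1), ?_⟩
      ext j
      by_cases hj : j = i
      · subst hj; simp; omega
      · simp [hj]
    have hn : ∑ i, b0 i = n := by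
      rw [hb0, Finset.sum_update_of_mem (Finset.mem_univ i)] at hb
      rw [← Finset.add_sum_erase _ _ (Finset.mem_univ i)]
      rw [← Finset.erase_eq] at hb
      omega
    subst hb0
    rw [mS_update, J_parts, norm_neg, ← mS_update]
    have t1 := ih b0 hn (Function.update a i (a i - 1)) b'
    have t2 := ih b0 hn a (Function.update b' i (b' i + 1))
    refine (norm_add_le _ _).trans ?_
    rw [norm_mul, Complex.norm_natCast]
    refine (add_le_add (mul_le_mul_of_nonneg_left t1 (Nat.cast_nonneg _)) t2).trans (le_of_eq ?_)
    rw [← Finset.mul_prod_erase _ _ (Finset.mem_univ i),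
      ← Finset.mul_prod_erase _ _ (Finset.mem_univ i),
      ← Finset.mul_prod_erase _ _ (Finset.mem_univ i)]
    simp only [Function.update_self]
    have p1 : ∏ x ∈ Finset.univ.erase i, SS h (Function.update a i (a i - 1) x) (b0 x) (b0 x + b' x)
        = ∏ x ∈ Finset.univ.erase i, SS h (a x) (b0 x) (b0 x + b' x) :=
      Finset.prod_congr rfl fun j hj => by
        rw [Function.update_of_ne (Finset.ne_of_mem_erase hj)]
    have p2 : ∏ x ∈ Finset.univ.erase i,
          SS h (a x) (b0 x) (b0 x + Function.update b' i (b' i + 1) x)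
        = ∏ x ∈ Finset.univ.erase i, SS h (a x) (b0 x) (b0 x + b' x) :=
      Finset.prod_congr rfl fun j hj => by
        rw [Function.update_of_ne (Finset.ne_of_mem_erase hj)]
    have p3 : ∏ x ∈ Finset.univ.erase i, SS h (a x) (Function.update b0 i (b0 i + 1) x)
          (Function.update b0 i (b0 i + 1) x + b' x)
        = ∏ x ∈ Finset.univ.erase i, SS h (a x) (b0 x) (b0 x + b' x) :=
      Finset.prod_congr rfl fun j hj => by
        rw [Function.update_of_ne (Finset.ne_of_mem_erase hj)]
    rw [p1, p2, p3]
    have e : b0 i + 1 + b' i = b0 i + b' i + 1 := by ring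
    rw [e, ← SS_rec, ← add_assoc]
    ring

lemma mon_exp {N : ℕ} (a : Fin N → ℕ) (c : ℝ) (hc : 0 < c) (x : EN N) :
    ‖mon a x‖ ^ 2 * Real.exp (-c * ‖x‖ ^ 2) ≤ ∏ i, ((a i).factorial / c ^ a i : ℝ) := by
  unfold mon
  rw [EuclideanSpace.norm_sq_eq, Finset.mul_sum, Real.exp_sum, norm_prod, ← Finset.prod_pow,
    ← Finset.prod_mul_distrib]
  refine Finset.prod_le_prod (fun _ _ => by positivity) fun i _ => ?_
  have h := Real.pow_div_factorial_le_exp (c * ‖x i‖ ^ 2) (by positivity) (a i)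
  rw [div_le_iff₀ (by positivity)] at h
  rw [neg_mul, Real.exp_neg, ← div_eq_mul_inv, div_le_div_iff₀ (Real.exp_pos _) (by positivity),
    norm_pow, Complex.norm_real]
  calc (‖x i‖ ^ a i) ^ 2 * c ^ a i = (c * ‖x i‖ ^ 2) ^ a i := by ring
    _ ≤ _ := h.trans (le_of_eq (mul_comm _ _))

lemma gauss_int {N : ℕ} (c : ℝ) (hc : 0 < c) :
    Integrable (fun x : EN N => Real.exp (-c * ‖x‖ ^ 2)) := by
  by_contra hcon
  have h := GaussianFourier.integral_rexp_neg_mul_sq_norm (V := EN N) hc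
  rw [integral_undef hcon] at h
  have : 0 < (Real.pi / c) ^ (Module.finrank ℝ (EN N) / 2 : ℝ) := by positivity
  linarith

lemma gauss_val {N : ℕ} (c : ℝ) (hc : 0 < c) :
    ∫ x : EN N, Real.exp (-c * ‖x‖ ^ 2) = (Real.pi / c) ^ ((N : ℝ) / 2) := by
  have h := GaussianFourier.integral_rexp_neg_mul_sq_norm (V := EN N) hc
  rw [h, finrank_euclideanSpace, Fintype.card_fin]

lemma pt_bound {N : ℕ} (a : Fin N → ℕ) (c C : ℝ) (hc : 0 < c) (x : EN N) (z : ℂ)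
    (hz : ‖z‖ ≤ C * Real.exp (-c * ‖x‖ ^ 2)) :
    ‖mon a x * z‖ ^ 2 ≤ (C ^ 2 * ∏ i, ((a i).factorial / c ^ a i : ℝ))
      * Real.exp (-c * ‖x‖ ^ 2) := by
  have h1 := mon_exp a c hc x
  rw [norm_mul, mul_pow]
  calc ‖mon a x‖ ^ 2 * ‖z‖ ^ 2 ≤ ‖mon a x‖ ^ 2 * (C * Real.exp (-c * ‖x‖ ^ 2)) ^ 2 := by gcongr
    _ = C ^ 2 * (‖mon a x‖ ^ 2 * Real.exp (-c * ‖x‖ ^ 2)) * Real.exp (-c * ‖x‖ ^ 2) := by ring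
    _ ≤ _ := by gcongr

lemma L2a_int {N : ℕ} (a : Fin N → ℕ) (c C : ℝ) (hc : 0 < c) (f : 𝓢(EN N, ℂ))
    (hf : ∀ x, ‖f x‖ ≤ C * Real.exp (-c * ‖x‖ ^ 2)) :
    Integrable (fun x => ‖mon a x * f x‖ ^ 2) := by
  refine Integrable.mono' ((gauss_int c hc).const_mul
    (C ^ 2 * ∏ i, ((a i).factorial / c ^ a i : ℝ))) ?_ ?_
  · have := mon_cont a
    have := f.continuous
    exact Continuous.aestronglyMeasurable (by fun_prop)
  · refine Filter.Eventually.of_forall fun x => ?_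
    rw [Real.norm_of_nonneg (by positivity)]
    exact pt_bound a c C hc x _ (hf x)

lemma L2a {N : ℕ} (a : Fin N → ℕ) (c C : ℝ) (hc : 0 < c) (f : 𝓢(EN N, ℂ))
    (hf : ∀ x, ‖f x‖ ≤ C * Real.exp (-c * ‖x‖ ^ 2)) :
    ∫ x, ‖mon a x * f x‖ ^ 2 ≤
      (C ^ 2 * ∏ i, ((a i).factorial / c ^ a i : ℝ)) * (Real.pi / c) ^ ((N : ℝ) / 2) := by
  rw [← gauss_val c hc, ← integral_const_mul]
  exact integral_mono (L2a_int a c C hc f hf) ((gauss_int c hc).const_mul _)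
    fun x => pt_bound a c C hc x _ (hf x)

lemma L2b {N : ℕ} (b : Fin N → ℕ) (c C : ℝ) (hc : 0 < c) (f : 𝓢(EN N, ℂ))
    (hf : ∀ w, ‖(𝓕 f) w‖ ≤ C * Real.exp (-c * ‖(2 * Real.pi) • w‖ ^ 2)) :
    ∫ x, ‖mS b f x‖ ^ 2 ≤ (C ^ 2 * ∏ i, ((b i).factorial / c ^ b i : ℝ))
      * (Real.pi / (c * (2 * Real.pi) ^ 2)) ^ ((N : ℝ) / 2) := by
  have hpi := Real.pi_pos
  rw [← SchwartzMap.integral_norm_sq_fourier]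
  rw [← gauss_val (c * (2 * Real.pi) ^ 2) (by positivity), ← integral_const_mul]
  refine integral_mono_of_nonneg (Filter.Eventually.of_forall fun x => by positivity)
    ((gauss_int _ (by positivity)).const_mul _) (Filter.Eventually.of_forall fun w => ?_)
  have h := pt_bound b c C hc _ _ (hf w)
  have e1 : ‖(𝓕 (mS b f)) w‖ = ‖mon b ((2 * Real.pi) • w) * (𝓕 f) w‖ := by
    rw [fourier_mS, norm_mul, norm_mul, mon, norm_prod, norm_prod]
    congr 1
    refine Finset.prod_congr rfl fun i _ => ?_
    simp
  have e2 : -(c * (2 * Real.pi) ^ 2) * ‖w‖ ^ 2 = -c * ‖(2 * Real.pi) • w‖ ^ 2 := by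
    rw [norm_smul, Real.norm_of_nonneg (by positivity)]; ring
  simp only [e1, e2]
  exact h

lemma J_CS {N : ℕ} (a : Fin N → ℕ) (c C : ℝ) (hc : 0 < c) (f g : 𝓢(EN N, ℂ))
    (hf : ∀ x, ‖f x‖ ≤ C * Real.exp (-c * ‖x‖ ^ 2)) :
    ‖J a f g‖ ≤ Real.sqrt (∫ x, ‖mon a x * f x‖ ^ 2) * Real.sqrt (∫ x, ‖g x‖ ^ 2) := by
  have h1 : MemLp (fun x => mon a x * f x) (ENNReal.ofReal 2) volume := by
    have := mon_cont a
    have := f.continuous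
    have h0 : AEStronglyMeasurable (fun x => mon a x * f x) volume :=
      Continuous.aestronglyMeasurable (by fun_prop)
    have := (memLp_two_iff_integrable_sq_norm h0).mpr (L2a_int a c C hc f hf)
    simpa using this
  have h2 : MemLp (fun x => g x) (ENNReal.ofReal 2) volume := by
    exact g.memLp _ _
  have h := integral_mul_norm_le_Lp_mul_Lq (p := 2) (q := 2) Real.HolderConjugate.two_two h1 h2
  rw [Real.sqrt_eq_rpow, Real.sqrt_eq_rpow]
  simp only [Real.rpow_two] at h
  refine le_trans ?_ h
  unfold J
  refine (norm_integral_le_integral_norm _).trans (le_of_eq ?_)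
  refine integral_congr_ae (Filter.Eventually.of_forall fun x => ?_)
  simp

lemma aux_sqrt (n γ : ℕ) (c : ℝ) (hc : 0 < c) (hc' : c < 1) (hγ : γ ≤ 2 * n) :
    Real.sqrt ((γ.factorial : ℝ) * ((2 * n - γ).factorial / c ^ (2 * n - γ)))
      ≤ 2 ^ n * n.factorial / c ^ n := by
  refine Real.sqrt_le_iff.mpr ⟨by positivity, ?_⟩
  have h1 : (γ.factorial : ℝ) * (2 * n - γ).factorial ≤ (2 * n).factorial := by
    have := Nat.factorial_mul_factorial_dvd_factorial hγ
    exact_mod_cast Nat.le_of_dvd (Nat.factorial_pos _) this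
  have h2 : ((2 * n).factorial : ℝ) ≤ 2 ^ (2 * n) * n.factorial * n.factorial := by
    have e := Nat.choose_mul_factorial_mul_factorial (n := 2 * n) (k := n) (by omega)
    have e' : 2 * n - n = n := by omega
    rw [e'] at e
    have := Nat.choose_le_two_pow (2 * n) n
    rw [← e]
    push_cast
    gcongr
    exact_mod_cast this
  have h3 : c ^ (2 * n) ≤ c ^ (2 * n - γ) :=
    pow_le_pow_of_le_one hc.le hc'.le (by omega)
  calc (γ.factorial : ℝ) * ((2 * n - γ).factorial / c ^ (2 * n - γ))
      = (γ.factorial : ℝ) * (2 * n - γ).factorial / c ^ (2 * n - γ) := by ring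
    _ ≤ (2 ^ (2 * n) * n.factorial * n.factorial) / c ^ (2 * n) := by
        exact div_le_div₀ (by positivity) (h1.trans h2) (by positivity) h3
    _ = _ := by
        rw [div_pow]; congr 1 <;> ring

noncomputable def hh (c₁ c₂ : ℝ) (a b : ℕ) : ℝ :=
  Real.sqrt (a.factorial / c₁ ^ a) * Real.sqrt (b.factorial / c₂ ^ b)

lemma hh_nonneg (c₁ c₂ : ℝ) (a b : ℕ) : 0 ≤ hh c₁ c₂ a b := by unfold hh; positivity

lemma SS_final (c₁ c₂ : ℝ) (hc₁ : 0 < c₁) (hc₁' : c₁ < 1) (hc₂ : 0 < c₂) (hc₂' : c₂ < 1)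
    (α β : ℕ) :
    SS (hh c₁ c₂) (2 * α) β (β + β) ≤
      8 ^ α * 8 ^ β * (α.factorial / c₁ ^ α) * (β.factorial / c₂ ^ β) := by
  set M : ℝ := (2 ^ α * α.factorial / c₁ ^ α) * (2 ^ β * β.factorial / c₂ ^ β) with hM
  have hM0 : 0 ≤ M := by positivity
  have hterm : ∀ γ ∈ Finset.range (β + 1), (β.choose γ : ℝ) * ((2 * α).descFactorial γ : ℝ)
      * hh c₁ c₂ (2 * α - γ) (β + β - γ) ≤ (β.choose γ : ℝ) * (4 ^ α * M) := by
    intro γ hγ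
    rw [mul_assoc]
    refine mul_le_mul_of_nonneg_left ?_ (by positivity)
    by_cases h : γ ≤ 2 * α
    · rw [Nat.descFactorial_eq_factorial_mul_choose]
      have s1 := aux_sqrt α γ c₁ hc₁ hc₁' h
      have s2 := aux_sqrt β γ c₂ hc₂ hc₂' (by have := Finset.mem_range.mp hγ; omega)
      have s3 : (((2 * α).choose γ : ℕ) : ℝ) ≤ 4 ^ α := by
        have := Nat.choose_le_two_pow (2 * α) γ
        rw [pow_mul] at this
        exact_mod_cast this
      rw [← two_mul]
      have e : (γ.factorial : ℝ) * hh c₁ c₂ (2 * α - γ) (2 * β - γ) =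
          Real.sqrt ((γ.factorial : ℝ) * ((2 * α - γ).factorial / c₁ ^ (2 * α - γ))) *
          Real.sqrt ((γ.factorial : ℝ) * ((2 * β - γ).factorial / c₂ ^ (2 * β - γ))) := by
        unfold hh
        rw [Real.sqrt_mul (Nat.cast_nonneg _), Real.sqrt_mul (Nat.cast_nonneg _)]
        have := Real.mul_self_sqrt (Nat.cast_nonneg (α := ℝ) γ.factorial)
        nth_rewrite 1 [← this]
        ring
      push_cast
      calc _ = (((2 * α).choose γ : ℕ) : ℝ) *
            ((γ.factorial : ℝ) * hh c₁ c₂ (2 * α - γ) (2 * β - γ)) := by ring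
        _ ≤ 4 ^ α * M := by
          rw [e]
          refine mul_le_mul s3 ?_ (by positivity) (by positivity)
          exact mul_le_mul s1 s2 (by positivity) (by positivity)
    · rw [Nat.descFactorial_of_lt (by omega)]
      simp only [Nat.cast_zero, zero_mul]
      positivity
  refine (Finset.sum_le_sum hterm).trans ?_
  rw [← Finset.sum_mul]
  have hs : ∑ i ∈ Finset.range (β + 1), (β.choose i : ℝ) = 2 ^ β := by
    exact_mod_cast Nat.sum_range_choose β
  rw [hs, hM]
  have h8 : (2 : ℝ) ^ β * 2 ^ β ≤ 8 ^ β := by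
    rw [← mul_pow]; gcongr; norm_num
  have h8a : (4 : ℝ) ^ α * 2 ^ α = 8 ^ α := by
    rw [← mul_pow]; norm_num
  calc _ = (4 ^ α * 2 ^ α) * ((2 : ℝ) ^ β * 2 ^ β) * (α.factorial / c₁ ^ α)
          * (β.factorial / c₂ ^ β) := by ring
    _ ≤ _ := by rw [h8a]; gcongr

lemma fourier_rel {N : ℕ} (f : 𝓢(EN N, ℂ)) (w : EN N) :
    (𝓕 f) w = ∫ x : EN N,
      Complex.exp (-(Complex.I * ∑ i, (x i : ℂ) * ((((2 * Real.pi) • w) i : ℝ) : ℂ))) * f x := by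
  rw [SchwartzMap.fourier_coe, Real.fourier_eq']
  refine integral_congr_ae (Filter.Eventually.of_forall fun x => ?_)
  simp only [smul_eq_mul]
  congr 2
  rw [PiLp.inner_apply]
  push_cast
  rw [Finset.mul_sum, Finset.sum_mul, Finset.mul_sum, ← Finset.sum_neg_distrib]
  refine Finset.sum_congr rfl fun i _ => ?_
  simp
  ring

lemma K_eq (N : ℕ) (c₁ c₂ : ℝ) (hc₁ : 0 < c₁) (hc₂ : 0 < c₂) :
    Real.sqrt ((Real.pi / c₁) ^ ((N : ℝ) / 2)) *
      Real.sqrt ((Real.pi / (c₂ * (2 * Real.pi) ^ 2)) ^ ((N : ℝ) / 2)) =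
    (2 : ℝ) ^ (-((N : ℝ) / 2)) / (c₁ ^ ((N : ℝ) / 4) * c₂ ^ ((N : ℝ) / 4)) := by
  have hpi := Real.pi_pos
  rw [Real.sqrt_eq_rpow, Real.sqrt_eq_rpow, ← Real.rpow_mul (by positivity),
    ← Real.rpow_mul (by positivity), ← Real.mul_rpow (by positivity) (by positivity)]
  have e : Real.pi / c₁ * (Real.pi / (c₂ * (2 * Real.pi) ^ 2)) = (2 ^ (-2 : ℝ)) / (c₁ * c₂) := by
    rw [Real.rpow_neg (by norm_num), Real.rpow_two]
    field_simp
  rw [e, Real.div_rpow (by positivity) (by positivity), ← Real.rpow_mul (by norm_num),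
    Real.mul_rpow hc₁.le hc₂.le]
  ring_nf

lemma base_bound {N : ℕ} (c₁ c₂ C₁ C₂ : ℝ) (hc₁ : 0 < c₁) (hc₂ : 0 < c₂)
    (hC₁ : 0 < C₁) (hC₂ : 0 < C₂) (f : 𝓢(EN N, ℂ))
    (hf : ∀ x, ‖f x‖ ≤ C₁ * Real.exp (-c₁ * ‖x‖ ^ 2))
    (hf' : ∀ w, ‖(𝓕 f) w‖ ≤ C₂ * Real.exp (-c₂ * ‖(2 * Real.pi) • w‖ ^ 2))
    (a b : Fin N → ℕ) :
    ‖J a f (mS b f)‖ ≤ (C₁ * C₂ * ((2 : ℝ) ^ (-((N : ℝ) / 2)) /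
      (c₁ ^ ((N : ℝ) / 4) * c₂ ^ ((N : ℝ) / 4)))) * ∏ i, hh c₁ c₂ (a i) (b i) := by
  refine (J_CS a c₁ C₁ hc₁ f (mS b f) hf).trans ?_
  have h1 := Real.sqrt_le_sqrt (L2a a c₁ C₁ hc₁ f hf)
  have h2 := Real.sqrt_le_sqrt (L2b b c₂ C₂ hc₂ f hf')
  refine (mul_le_mul h1 h2 (Real.sqrt_nonneg _) (Real.sqrt_nonneg _)).trans (le_of_eq ?_)
  have p1 : 0 ≤ ∏ i, ((a i).factorial / c₁ ^ a i : ℝ) := by positivity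
  have p2 : 0 ≤ ∏ i, ((b i).factorial / c₂ ^ b i : ℝ) := by positivity
  rw [← K_eq N c₁ c₂ hc₁ hc₂, Real.sqrt_mul (by positivity), Real.sqrt_mul (by positivity),
    Real.sqrt_mul (by positivity), Real.sqrt_mul (by positivity), Real.sqrt_sq hC₁.le,
    Real.sqrt_sq hC₂.le]
  simp only [hh]
  rw [Finset.prod_mul_distrib, Real.sqrt_prod _ (fun i _ => by positivity),
    Real.sqrt_prod _ (fun i _ => by positivity)]
  ring

lemma mon_sq {N : ℕ} (α : Fin N → ℕ) (x : EN N) (z : ℂ) :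
    mon (fun i => 2 * α i) x * z * (starRingEnd ℂ) z = ((‖mon α x * z‖ ^ 2 : ℝ) : ℂ) := by
  have h : mon (fun i => 2 * α i) x = mon α x * (starRingEnd ℂ) (mon α x) := by
    unfold mon
    rw [map_prod, ← Finset.prod_mul_distrib]
    refine Finset.prod_congr rfl fun i _ => ?_
    rw [map_pow, Complex.conj_ofReal]; ring
  push_cast
  rw [← Complex.mul_conj', h, map_mul]
  ring

/-- Let `N ≥ 1`, `0 < c₁ < 1`, `0 < c₂ < 1`, `C₁, C₂ > 0`, and let `f` be a
Schwartz function with `|f(x)| ≤ C₁ e^{-c₁|x|²}` and `|f̂(ξ)| ≤ C₂ e^{-c₂|ξ|²}`. Then for all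
multi-indices `α, β`:
`‖x^α ∂_x^β f‖²_{L²} ≤ 2^{3|α|+3|β|-N/2} C₁ c₁^{-(|α|+N/4)} C₂ c₂^{-(|β|+N/4)} α! β!`. -/
theorem statement_14 (N : ℕ) (hN : 1 ≤ N) (c₁ c₂ C₁ C₂ : ℝ)
    (hc₁ : 0 < c₁) (hc₁' : c₁ < 1) (hc₂ : 0 < c₂) (hc₂' : c₂ < 1)
    (hC₁ : 0 < C₁) (hC₂ : 0 < C₂)
    (f : SchwartzMap (EuclideanSpace ℝ (Fin N)) ℂ)
    (hf : ∀ x, ‖f x‖ ≤ C₁ * Real.exp (-c₁ * ‖x‖ ^ 2))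
    (hfhat : ∀ ξ : EuclideanSpace ℝ (Fin N),
      ‖∫ x : EuclideanSpace ℝ (Fin N),
          Complex.exp (-(Complex.I * ∑ i, (x i : ℂ) * (ξ i : ℂ))) * f x‖
        ≤ C₂ * Real.exp (-c₂ * ‖ξ‖ ^ 2)) :
    ∀ α β : Fin N → ℕ,
      (∫⁻ x : EuclideanSpace ℝ (Fin N),
          (‖(∏ i, (x i : ℂ) ^ α i) * mderiv β (fun y => f y) x‖₊ : ℝ≥0∞) ^ 2)
        ≤ ENNReal.ofReal
            ((2 : ℝ) ^ ((3 * (∑ i, α i) + 3 * (∑ i, β i) : ℕ) - (N : ℝ) / 2)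
              * (C₁ / c₁ ^ (((∑ i, α i : ℕ) : ℝ) + N / 4))
              * (C₂ / c₂ ^ (((∑ i, β i : ℕ) : ℝ) + N / 4))
              * (∏ i, Nat.factorial (α i)) * (∏ i, Nat.factorial (β i))) := by
  intro α β
  have hf' : ∀ w, ‖(𝓕 f) w‖ ≤ C₂ * Real.exp (-c₂ * ‖(2 * Real.pi) • w‖ ^ 2) := by
    intro w
    rw [fourier_rel]
    exact hfhat _
  have hJ := J_bound f (hh c₁ c₂) _ (base_bound c₁ c₂ C₁ C₂ hc₁ hc₂ hC₁ hC₂ f hf hf') _ β rfl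
    (fun i => 2 * α i) β
  have hint : Integrable (fun x => ‖mon α x * mS β f x‖ ^ 2) := by
    have h := (mon_int (fun i => 2 * α i) (mS β f) (mS β f)).norm
    refine h.congr (Filter.Eventually.of_forall fun x => ?_)
    simp only [mon_sq, Complex.norm_real]
    rw [Real.norm_of_nonneg (by positivity)]
  have hval : ‖J (fun i => 2 * α i) (mS β f) (mS β f)‖ = ∫ x, ‖mon α x * mS β f x‖ ^ 2 := by
    unfold J
    simp only [mon_sq]
    rw [integral_complex_ofReal, Complex.norm_real, Real.norm_of_nonneg]
    exact integral_nonneg fun x => by positivity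
  have hl : (∫⁻ x : EuclideanSpace ℝ (Fin N),
          (‖(∏ i, (x i : ℂ) ^ α i) * mderiv β (fun y => f y) x‖₊ : ℝ≥0∞) ^ 2)
      = ENNReal.ofReal (∫ x, ‖mon α x * mS β f x‖ ^ 2) := by
    rw [ofReal_integral_eq_lintegral_ofReal hint
      (Filter.Eventually.of_forall fun x => by positivity)]
    refine lintegral_congr fun x => ?_
    rw [ENNReal.ofReal_pow (norm_nonneg _), ofReal_norm, mS_coe]
    rfl
  rw [hl, ← hval]
  refine ENNReal.ofReal_le_ofReal (hJ.trans ?_)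
  have hprod : ∏ i, SS (hh c₁ c₂) (2 * α i) (β i) (β i + β i) ≤
      ∏ i, (8 ^ α i * 8 ^ β i * ((α i).factorial / c₁ ^ α i) * ((β i).factorial / c₂ ^ β i) : ℝ) :=
    Finset.prod_le_prod (fun i _ => SS_nonneg _ (hh_nonneg c₁ c₂) _ _ _)
      fun i _ => SS_final c₁ c₂ hc₁ hc₁' hc₂ hc₂' _ _
  refine (mul_le_mul_of_nonneg_left hprod (by positivity)).trans (le_of_eq ?_)
  simp only [Finset.prod_mul_distrib, Finset.prod_div_distrib, Finset.prod_pow_eq_pow_sum]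
  rw [Real.rpow_sub (by norm_num), Real.rpow_natCast, Real.rpow_add hc₁, Real.rpow_add hc₂,
    Real.rpow_natCast, Real.rpow_natCast, Real.rpow_neg (by norm_num), pow_add, pow_mul, pow_mul]
  norm_num
  field_simp
end

section
/- Let q be the complex-valued quadratic form on ℝ^{4n} (with variables (x,v,ξ,η) ∈ ℝⁿ×ℝⁿ×ℝⁿ×ℝⁿ) of the Kramers–Fokker–Planck operator without external potential, q(x,v,ξ,η) = |η|² + (1/4)|v|² + i⟨v,ξ⟩. Then the singular space of q equals S = ℝⁿ × {0} × {0} × {0}, i.e. the set of vectors (x,0,0,0) with x ∈ ℝⁿ; moreover already Ker(Re F) ∩ Ker(Re F · Im F) ∩ ℝ^{4n} = ℝⁿ×{0}×{0}×{0}, where F is the Hamilton map of q. -/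
noncomputable section

open Matrix

/-- The phase space index type for `ℝ^{4n}`, with variables `(x, v, ξ, η)`:
`x i = X (inl (inl i))`, `v i = X (inl (inr i))`, `ξ i = X (inr (inl i))`,
`η i = X (inr (inr i))`. -/
abbrev PS (n : ℕ) := (Fin n ⊕ Fin n) ⊕ (Fin n ⊕ Fin n)

/-- The standard symplectic matrix `J = [[0, I], [-I, 0]]` on `ℝ^{2N}` (complexified). -/
def JmatG (m : Type*) [Fintype m] [DecidableEq m] : Matrix (m ⊕ m) (m ⊕ m) ℂ :=
  Matrix.fromBlocks 0 1 (-1) 0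

/-- The canonical embedding of a real vector into `ℂ^ι`. -/
def cvec {ι : Type*} (X : ι → ℝ) : ι → ℂ := fun i => (X i : ℂ)

end

open Matrix in
theorem symm_zero_aux {ι : Type*} [Fintype ι] [DecidableEq ι] (D : Matrix ι ι ℂ)
    (hs : D.IsSymm) (h : ∀ X : ι → ℂ, X ⬝ᵥ D.mulVec X = 0) : D = 0 := by
  ext i j
  have h1 := h (Pi.single i 1)
  have h2 := h (Pi.single j 1)
  have h3 := h (Pi.single i 1 + Pi.single j 1)
  have h4 := hs.apply i j
  simp [Matrix.mulVec_add] at h1 h2 h3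
  rw [h1, h2, h4] at h3
  simp only [Matrix.zero_apply]
  linear_combination h3 / 2

open Matrix in
noncomputable def kfpQ (n : ℕ) : Matrix (PS n) (PS n) ℂ :=
  fromBlocks (fromBlocks 0 0 0 ((1 / 4 : ℂ) • 1)) (fromBlocks 0 0 ((Complex.I / 2) • 1) 0)
    (fromBlocks 0 ((Complex.I / 2) • 1) 0 0) (fromBlocks 0 0 0 1)

open Matrix in
theorem kfpQ_mulVec (n : ℕ) (X : PS n → ℂ) : (kfpQ n).mulVec X =
    Sum.elim (Sum.elim (fun _ => 0)
      (fun i => 1 / 4 * X (Sum.inl (Sum.inr i)) + Complex.I / 2 * X (Sum.inr (Sum.inl i))))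
      (Sum.elim (fun i => Complex.I / 2 * X (Sum.inl (Sum.inr i)))
        (fun i => X (Sum.inr (Sum.inr i)))) := by
  ext i
  rcases i with (i | i) | (i | i) <;>
    simp [kfpQ, fromBlocks_mulVec, smul_mulVec]

open Matrix in
theorem kfpQ_symm (n : ℕ) : (kfpQ n).IsSymm := by
  simp [Matrix.IsSymm, kfpQ, fromBlocks_transpose]

open Matrix in
theorem kfp_re (n : ℕ) : matRe (JmatG (Fin n ⊕ Fin n) * kfpQ n) =
    fromBlocks (fromBlocks 0 0 0 0) (fromBlocks 0 0 0 1)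
      (fromBlocks 0 0 0 ((-1 / 4 : ℂ) • 1)) (fromBlocks 0 0 0 0) := by
  ext i j
  rcases i with (i | i) | (i | i) <;> rcases j with (j | j) | (j | j) <;>
    simp [matRe, JmatG, kfpQ, fromBlocks_multiply, Matrix.one_apply] <;>
    split_ifs <;> norm_num

open Matrix in
theorem kfp_im (n : ℕ) : matIm (JmatG (Fin n ⊕ Fin n) * kfpQ n) =
    fromBlocks (fromBlocks 0 ((1 / 2 : ℂ) • 1) 0 0) (fromBlocks 0 0 0 0)
      (fromBlocks 0 0 0 0) (fromBlocks 0 0 ((-1 / 2 : ℂ) • 1) 0) := by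
  ext i j
  rcases i with (i | i) | (i | i) <;> rcases j with (j | j) | (j | j) <;>
    simp [matIm, JmatG, kfpQ, fromBlocks_multiply, Matrix.one_apply] <;>
    split_ifs <;> norm_num

open Matrix in
theorem kfp_re_mulVec (n : ℕ) (X : PS n → ℂ) :
    (matRe (JmatG (Fin n ⊕ Fin n) * kfpQ n)).mulVec X =
    Sum.elim (Sum.elim (fun _ => 0) (fun i => X (Sum.inr (Sum.inr i))))
      (Sum.elim (fun _ => 0) (fun i => -1 / 4 * X (Sum.inl (Sum.inr i)))) := by
  rw [kfp_re]
  ext i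
  rcases i with (i | i) | (i | i) <;>
    simp [fromBlocks_mulVec, smul_mulVec]

open Matrix in
theorem kfp_im_mulVec (n : ℕ) (X : PS n → ℂ) :
    (matIm (JmatG (Fin n ⊕ Fin n) * kfpQ n)).mulVec X =
    Sum.elim (Sum.elim (fun i => 1 / 2 * X (Sum.inl (Sum.inr i))) (fun _ => 0))
      (Sum.elim (fun _ => 0) (fun i => -1 / 2 * X (Sum.inr (Sum.inl i)))) := by
  rw [kfp_im]
  ext i
  rcases i with (i | i) | (i | i) <;>
    simp [fromBlocks_mulVec, smul_mulVec]

/-- Let `q(x,v,ξ,η) = |η|² + (1/4)|v|² + i⟨v,ξ⟩` be the quadratic symbol of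
the Kramers–Fokker–Planck operator without external potential, with symmetric matrix `Q` and
Hamilton map `F = JQ`. Then the singular space of `q` equals `ℝⁿ × {0} × {0} × {0}`; moreover
already `Ker(Re F) ∩ Ker(Re F · Im F) ∩ ℝ^{4n} = ℝⁿ × {0} × {0} × {0}`. -/
theorem statement_15 (n : ℕ) (hn : 0 < n)
    (Q : Matrix (PS n) (PS n) ℂ) (hQsymm : Q.IsSymm)
    (hq : ∀ X : PS n → ℂ,
      ∑ i, X i * Q.mulVec X i
        = (∑ i, X (Sum.inr (Sum.inr i)) ^ 2)
          + (1 / 4 : ℂ) * ∑ i, X (Sum.inl (Sum.inr i)) ^ 2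
          + Complex.I * ∑ i, X (Sum.inl (Sum.inr i)) * X (Sum.inr (Sum.inl i)))
    (F : Matrix (PS n) (PS n) ℂ) (hF : F = JmatG (Fin n ⊕ Fin n) * Q) :
    ∀ X : PS n → ℝ,
      (((matRe F).mulVec (cvec X) = 0 ∧ (matRe F * matIm F).mulVec (cvec X) = 0)
        ↔ ((∀ i, X (Sum.inl (Sum.inr i)) = 0) ∧ (∀ i, X (Sum.inr (Sum.inl i)) = 0)
            ∧ ∀ i, X (Sum.inr (Sum.inr i)) = 0))
      ∧ ((∀ j < 4 * n, (matRe F * matIm F ^ j).mulVec (cvec X) = 0)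
        ↔ ((∀ i, X (Sum.inl (Sum.inr i)) = 0) ∧ (∀ i, X (Sum.inr (Sum.inl i)) = 0)
            ∧ ∀ i, X (Sum.inr (Sum.inr i)) = 0)) := by
  have hQ : Q = kfpQ n := by
    refine sub_eq_zero.mp (symm_zero_aux _ (hQsymm.sub (kfpQ_symm n)) fun X => ?_)
    have h := hq X
    rw [Matrix.sub_mulVec, dotProduct_sub, sub_eq_zero]
    refine h.trans ?_
    rw [kfpQ_mulVec]
    simp only [dotProduct, Fintype.sum_sum_type, Sum.elim_inl, Sum.elim_inr, Finset.mul_sum,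
      mul_zero, Finset.sum_const_zero, zero_add, ← Finset.sum_add_distrib]
    refine Finset.sum_congr rfl fun i _ => ?_
    ring
  subst hQ
  subst hF
  intro X
  have key : ((matRe (JmatG (Fin n ⊕ Fin n) * kfpQ n)).mulVec (cvec X) = 0 ∧
      (matRe (JmatG (Fin n ⊕ Fin n) * kfpQ n) *
        matIm (JmatG (Fin n ⊕ Fin n) * kfpQ n)).mulVec (cvec X) = 0)
        ↔ ((∀ i, X (Sum.inl (Sum.inr i)) = 0) ∧ (∀ i, X (Sum.inr (Sum.inl i)) = 0)
            ∧ ∀ i, X (Sum.inr (Sum.inr i)) = 0) := by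
    rw [← Matrix.mulVec_mulVec, kfp_im_mulVec, kfp_re_mulVec, kfp_re_mulVec]
    simp only [funext_iff, Sum.forall, Sum.elim_inl, Sum.elim_inr, Pi.zero_apply, cvec]
    simp
    tauto
  refine ⟨key, fun h => key.mp ⟨?_, ?_⟩, fun h j _ => ?_⟩
  · simpa using h 0 (by omega)
  · simpa using h 1 (by omega)
  · cases j with
    | zero => simpa using (key.mpr h).1
    | succ j =>
      have h0 : (matIm (JmatG (Fin n ⊕ Fin n) * kfpQ n)).mulVec (cvec X) = 0 := by
        rw [kfp_im_mulVec]
        ext i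
        rcases i with (i | i) | (i | i) <;> simp [cvec, h.1, h.2.1]
      rw [pow_succ, ← mul_assoc, ← Matrix.mulVec_mulVec, h0, Matrix.mulVec_zero]
end

section
/- Let a ∈ ℝ with a ≠ 0, and let q be the complex-valued quadratic form on ℝ^{4n} (with variables (x,v,ξ,η) ∈ ℝⁿ×ℝⁿ×ℝⁿ×ℝⁿ) of the Kramers–Fokker–Planck operator with quadratic potential, q(x,v,ξ,η) = |η|² + (1/4)|v|² + i(⟨v,ξ⟩ − a⟨x,η⟩). Then the singular space of q is reduced to zero: S = Ker(Re F) ∩ Ker(Re F · Im F) ∩ ℝ^{4n} = {0}, where F is the Hamilton map of q. -/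
theorem symm_eq_zero {ι : Type*} [Fintype ι] [DecidableEq ι] (M : Matrix ι ι ℂ)
    (hM : M.IsSymm) (h : ∀ X : ι → ℂ, ∑ i, X i * M.mulVec X i = 0) : M = 0 := by
  have hX : ∀ X : ι → ℂ, dotProduct X (M.mulVec X) = 0 := h
  ext i j
  have h1 := hX (Pi.single i 1 + Pi.single j 1)
  have h2 := hX (Pi.single i 1)
  have h3 := hX (Pi.single j 1)
  have h4 := hM.apply i j
  simp only [Matrix.mulVec_add, add_dotProduct, dotProduct_add, single_dotProduct,
    Matrix.mulVec_single_one, Matrix.col_apply, one_mul] at h1 h2 h3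
  simp only [Matrix.zero_apply]
  linear_combination (h1 - h2 - h3 - h4) / 2

/-- The explicit matrix of the KFP quadratic form. -/
noncomputable def Q0 (n : ℕ) (a : ℝ) : Matrix (PS n) (PS n) ℂ :=
  Matrix.fromBlocks (Matrix.fromBlocks 0 0 0 ((1 / 4 : ℂ) • 1))
    (Matrix.fromBlocks 0 ((-(Complex.I * a / 2)) • 1) ((Complex.I / 2) • 1) 0)
    (Matrix.fromBlocks 0 ((Complex.I / 2) • 1) ((-(Complex.I * a / 2)) • 1) 0)
    (Matrix.fromBlocks 0 0 0 1)

theorem Q0_symm (n : ℕ) (a : ℝ) : (Q0 n a).IsSymm := by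
  simp [Q0, Matrix.IsSymm, Matrix.fromBlocks_transpose]

theorem mulVec_blocks {m k : Type*} [Fintype m] [Fintype k] (A : Matrix m m ℂ) (B : Matrix m k ℂ)
    (C : Matrix k m ℂ) (D : Matrix k k ℂ) (X : m ⊕ k → ℂ) :
    (Matrix.fromBlocks A B C D).mulVec X =
      Sum.elim (A.mulVec (fun i => X (Sum.inl i)) + B.mulVec (fun i => X (Sum.inr i)))
        (C.mulVec (fun i => X (Sum.inl i)) + D.mulVec (fun i => X (Sum.inr i))) :=
  Matrix.fromBlocks_mulVec A B C D X

theorem Q0_form (n : ℕ) (a : ℝ) (X : PS n → ℂ) :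
      ∑ i, X i * (Q0 n a).mulVec X i
        = (∑ i, X (Sum.inr (Sum.inr i)) ^ 2)
          + (1 / 4 : ℂ) * ∑ i, X (Sum.inl (Sum.inr i)) ^ 2
          + Complex.I * ((∑ i, X (Sum.inl (Sum.inr i)) * X (Sum.inr (Sum.inl i)))
              - (a : ℂ) * ∑ i, X (Sum.inl (Sum.inl i)) * X (Sum.inr (Sum.inr i))) := by
  simp only [Q0, mulVec_blocks, Fintype.sum_sum_type, Sum.elim_inl, Sum.elim_inr, Pi.add_apply,
    Matrix.smul_mulVec, Matrix.zero_mulVec, Matrix.one_mulVec, Pi.smul_apply, Pi.zero_apply,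
    smul_eq_mul, Finset.mul_sum, ← Finset.sum_add_distrib, ← Finset.sum_sub_distrib]
  refine Finset.sum_congr rfl fun i _ => ?_
  ring

theorem JQ0_re (n : ℕ) (a : ℝ) : matRe (JmatG (Fin n ⊕ Fin n) * Q0 n a) =
    Matrix.fromBlocks 0 (Matrix.fromBlocks 0 0 0 1)
      (Matrix.fromBlocks 0 0 0 ((-(1 / 4) : ℂ) • 1)) 0 := by
  simp only [JmatG, Q0, Matrix.fromBlocks_multiply, matRe]
  ext ((i | i) | (i | i)) ((j | j) | (j | j)) <;>
    by_cases h : i = j <;> simp [Matrix.one_apply, h]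

theorem JQ0_im (n : ℕ) (a : ℝ) : matIm (JmatG (Fin n ⊕ Fin n) * Q0 n a) =
    Matrix.fromBlocks (Matrix.fromBlocks 0 ((1 / 2 : ℂ) • 1) ((-(a / 2) : ℂ) • 1) 0) 0
      0 (Matrix.fromBlocks 0 ((a / 2 : ℂ) • 1) ((-(1 / 2) : ℂ) • 1) 0) := by
  simp only [JmatG, Q0, Matrix.fromBlocks_multiply, matIm]
  ext ((i | i) | (i | i)) ((j | j) | (j | j)) <;>
    by_cases h : i = j <;> simp [Matrix.one_apply, h]

/-- Let `a ≠ 0` and let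
`q(x,v,ξ,η) = |η|² + (1/4)|v|² + i(⟨v,ξ⟩ - a⟨x,η⟩)` be the quadratic symbol of the
Kramers–Fokker–Planck operator with quadratic potential, with symmetric matrix `Q` and Hamilton
map `F = JQ`. Then the singular space of `q` is reduced to zero:
`S = Ker(Re F) ∩ Ker(Re F · Im F) ∩ ℝ^{4n} = {0}`. -/
theorem statement_16 (n : ℕ) (hn : 0 < n) (a : ℝ) (ha : a ≠ 0)
    (Q : Matrix (PS n) (PS n) ℂ) (hQsymm : Q.IsSymm)
    (hq : ∀ X : PS n → ℂ,
      ∑ i, X i * Q.mulVec X i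
        = (∑ i, X (Sum.inr (Sum.inr i)) ^ 2)
          + (1 / 4 : ℂ) * ∑ i, X (Sum.inl (Sum.inr i)) ^ 2
          + Complex.I * ((∑ i, X (Sum.inl (Sum.inr i)) * X (Sum.inr (Sum.inl i)))
              - (a : ℂ) * ∑ i, X (Sum.inl (Sum.inl i)) * X (Sum.inr (Sum.inr i))))
    (F : Matrix (PS n) (PS n) ℂ) (hF : F = JmatG (Fin n ⊕ Fin n) * Q) :
    ∀ X : PS n → ℝ,
      ((∀ j < 4 * n, (matRe F * matIm F ^ j).mulVec (cvec X) = 0)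
        ↔ ((matRe F).mulVec (cvec X) = 0 ∧ (matRe F * matIm F).mulVec (cvec X) = 0))
      ∧ (((matRe F).mulVec (cvec X) = 0 ∧ (matRe F * matIm F).mulVec (cvec X) = 0)
        ↔ X = 0) := by
  have hQ : Q = Q0 n a := by
    rw [← sub_eq_zero]
    refine symm_eq_zero _ (hQsymm.sub (Q0_symm n a)) fun X => ?_
    simp only [Matrix.sub_mulVec, Pi.sub_apply, mul_sub, Finset.sum_sub_distrib]
    rw [hq X, Q0_form n a X, sub_self]
  subst hQ
  subst hF
  intro X
  have key : ((matRe (JmatG (Fin n ⊕ Fin n) * Q0 n a)).mulVec (cvec X) = 0 ∧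
      (matRe (JmatG (Fin n ⊕ Fin n) * Q0 n a) *
        matIm (JmatG (Fin n ⊕ Fin n) * Q0 n a)).mulVec (cvec X) = 0) → X = 0 := by
    rintro ⟨h1, h2⟩
    rw [← Matrix.mulVec_mulVec] at h2
    rw [JQ0_re] at h1 h2
    rw [JQ0_im] at h2
    ext ((i | i) | (i | i))
    · have := congrFun h2 (Sum.inr (Sum.inr i))
      simpa [mulVec_blocks, Matrix.neg_mulVec, Matrix.smul_mulVec, cvec, ha] using this
    · have := congrFun h1 (Sum.inr (Sum.inr i))
      simpa [mulVec_blocks, Matrix.neg_mulVec, Matrix.smul_mulVec, cvec] using this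
    · have := congrFun h2 (Sum.inl (Sum.inr i))
      simpa [mulVec_blocks, Matrix.neg_mulVec, Matrix.smul_mulVec, cvec] using this
    · have := congrFun h1 (Sum.inl (Sum.inr i))
      simpa [mulVec_blocks, Matrix.neg_mulVec, Matrix.smul_mulVec, cvec] using this
  have hz : cvec (0 : PS n → ℝ) = 0 := by ext i; simp [cvec]
  refine ⟨⟨fun h => ⟨?_, ?_⟩, fun h j _ => ?_⟩, key, fun h => ?_⟩
  · simpa using h 0 (by omega)
  · simpa using h 1 (by omega)
  · rw [key h, hz, Matrix.mulVec_zero]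
  · rw [h, hz]
    exact ⟨Matrix.mulVec_zero _, Matrix.mulVec_zero _⟩
end
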